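/- arXiv:1208.5460 — 2 statements merged into one kernel-verified Lean document; each statement's English description precedes it below -/
import Mathlib

section
/- There exist a real number δ with 1.30 < δ < 1.31 (the Hausdorff dimension of the Apollonian gasket) and a constant c > 0 such that #{v ∈ Γ·v₀ : v ≠ v₀ and max_{1≤j≤4} |v_j| < T} / T^δ → c as T → ∞. Equivalently, the number of circles in the gasket of curvature less than T is asymptotic to c·T^δ. -/
open Filter

/-- The four generators `S₁, S₂, S₃, S₄` of the Apollonian group. -/
def Sgen : Fin 4 → Matrix (Fin 4) (Fin 4) ℤ :=
  ![!![-1, 2, 2, 2; 0, 1, 0, 0; 0, 0, 1, 0; 0, 0, 0, 1],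
    !![1, 0, 0, 0; 2, -1, 2, 2; 0, 0, 1, 0; 0, 0, 0, 1],
    !![1, 0, 0, 0; 0, 1, 0, 0; 2, 2, -1, 2; 0, 0, 0, 1],
    !![1, 0, 0, 0; 0, 1, 0, 0; 0, 0, 1, 0; 2, 2, 2, -1]]

/-- Membership in the Apollonian group `Γ = ⟨S₁, S₂, S₃, S₄⟩`. -/
def ApollonianMem (γ : Matrix (Fin 4) (Fin 4) ℤ) : Prop :=
  ∃ l : List (Fin 4), γ = (l.map Sgen).prod

/-- The root quadruple `(−10, 18, 23, 27)` of the gasket. -/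
def rootQuadruple : Fin 4 → ℤ := ![-10, 18, 23, 27]

/-- The orbit `Γ·v₀` of the root quadruple. -/
def apollonianOrbit : Set (Fin 4 → ℤ) :=
  {v | ∃ γ : Matrix (Fin 4) (Fin 4) ℤ, ApollonianMem γ ∧ γ.mulVec rootQuadruple = v}

/-!
A quadruple with its largest entry distinguished is recorded by coordinates in which the moves
increasing the curvature are linear maps with nonnegative coefficients. The last letter of a reduced
word is the position of the largest entry, so the orbit is the root together with four trees of
configurations, and counting by curvature becomes a problem about these trees.

Let `δ` be the critical exponent of the Poincaré series `∑ curv ^ (-s)` over a tree. Long runs of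
equal moves are parabolic and can be summed, which shows that the set of exponents of convergence is
open; hence the series diverges at `δ`. The limit of the normalised series as `s ↓ δ` (Patterson's
construction) is a positive function `h`, homogeneous of degree `-δ`, with
`h q = ∑ i, h (child i q)`.

The sum `F` of `(1 - curv)⁺` over the tree of a configuration satisfies the same equation up to a
bounded term, so that `F - m h` and `M h - F`, suitably corrected by a constant, are superharmonic
where `m ≤ F / h ≤ M`. By a long run of equal moves every configuration has descendants close to a
multiple of one fixed cusp configuration. Near this cusp `F / h` is at least, or at most, the
midpoint of `[m, M]`; either bound spreads to all smaller configurations, and so the oscillation of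
`F / h` contracts by a fixed factor. Hence `F / h` converges, and since `F` is an integral of the
count, the monotone density theorem gives the asymptotics of the count itself.

For the numerical bounds on `δ`, the powers `-1.31` and `-108 / 83` of suitable linear forms are a
supersolution and a subsolution of the tree recursion. Convexity reduces this to finitely many
inequalities between integers, at the generators of three simplicial cones.
-/

namespace Apollonian

/-! ### Configurations -/

/-- A configuration encodes a quadruple of curvatures `(b₀, b₁, b₂, d)` with a distinguished
entry `d` (in practice the largest one) by the pair `(x, s)` with `xᵢ = ∑_{j ≠ i} bⱼ` and
`s = (d - b₀ - b₁ - b₂) / 2`. In these coordinates the Apollonian moves which increase the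
curvature are positive. The Descartes equation is not imposed, so configurations may be
rescaled and compared coordinatewise. -/
abbrev Config := (Fin 3 → ℝ) × ℝ

/-- The Apollonian move replacing the curvature `bᵢ` of a configuration by `2(bⱼ + bₖ + d) - bᵢ`,
which becomes the new distinguished curvature. -/
def child (i : Fin 3) (q : Config) : Config :=
  (fun j => if j = i then q.1 i else q.1 j + q.1 i + 2 * q.2, q.2 + q.1 i)

/-- The distinguished curvature of a configuration. -/
noncomputable def curv (q : Config) : ℝ := (∑ i, q.1 i) / 2 + 2 * q.2

/-- The cone of configurations on which all estimates are made: positive coordinates, none of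
which is too large compared with the others. It is preserved by the moves. -/
structure Admissible (q : Config) : Prop where
  fst_pos : ∀ i, 0 < q.1 i
  snd_pos : 0 < q.2
  fst_le : ∀ i, 3 * q.1 i ≤ 2 * ∑ j, q.1 j
  snd_add_fst_le : ∀ i, q.2 + q.1 i ≤ ∑ j, q.1 j

/-- Relabelling of the three undistinguished curvatures of a configuration. -/
def permute (σ : Equiv.Perm (Fin 3)) (q : Config) : Config := (q.1 ∘ σ, q.2)

section Config

variable {q r : Config}

lemma sum_fst_child (i : Fin 3) (q : Config) :
    ∑ j, (child i q).1 j = (∑ j, q.1 j) + 2 * (q.1 i + 2 * q.2) := by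
  fin_cases i <;> simp [child, Fin.sum_univ_three] <;> ring

lemma curv_child (i : Fin 3) (q : Config) :
    curv (child i q) = curv q + 3 * q.1 i + 2 * q.2 := by
  rw [curv, sum_fst_child]
  simp only [curv, child]
  ring

lemma curv_smul (a : ℝ) (q : Config) : curv (a • q) = a * curv q := by
  simp only [curv, Prod.smul_fst, Prod.smul_snd, Pi.smul_apply, smul_eq_mul, ← Finset.mul_sum]
  ring

lemma curv_one : curv 1 = 7 / 2 := by
  norm_num [curv]

lemma curv_mono (h : q ≤ r) : curv q ≤ curv r := by
  have hsum : ∑ i, q.1 i ≤ ∑ i, r.1 i := Finset.sum_le_sum fun i _ => h.1 i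
  have hsnd : q.2 ≤ r.2 := h.2
  simp only [curv]; linarith

lemma child_smul (a : ℝ) (i : Fin 3) (q : Config) : child i (a • q) = a • child i q := by
  ext j
  · simp only [child, Prod.smul_fst, Prod.smul_snd, Pi.smul_apply, smul_eq_mul]
    split_ifs <;> ring
  · simp only [child, Prod.smul_fst, Prod.smul_snd, Pi.smul_apply, smul_eq_mul]; ring

lemma child_mono (i : Fin 3) : Monotone (child i) := by
  intro q r h
  have hfst : ∀ j, q.1 j ≤ r.1 j := h.1
  have hsnd : q.2 ≤ r.2 := h.2
  refine ⟨fun j => ?_, add_le_add hsnd (hfst i)⟩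
  simp only [child]
  split_ifs <;> linarith [hfst i, hfst j]

lemma child_permute (σ : Equiv.Perm (Fin 3)) (i : Fin 3) (q : Config) :
    child i (permute σ q) = permute σ (child (σ i) q) := by
  ext j <;> simp [child, permute]

lemma curv_permute (σ : Equiv.Perm (Fin 3)) (q : Config) : curv (permute σ q) = curv q := by
  simp only [curv, permute, Function.comp_apply, Equiv.sum_comp σ q.1]

lemma child_iterate (i : Fin 3) (n : ℕ) (q : Config) :
    (child i)^[n] q =
      (fun j => if j = i then q.1 i else q.1 j + 2 * n * q.2 + n ^ 2 * q.1 i,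
        q.2 + n * q.1 i) := by
  induction n with
  | zero => ext j <;> simp +contextual
  | succ n ih =>
    rw [Function.iterate_succ_apply', ih]
    ext j
    · simp only [child, if_true]
      split_ifs
      · rfl
      · push_cast; ring
    · simp only [child, if_true]; push_cast; ring

lemma curv_child_iterate (i : Fin 3) (n : ℕ) (q : Config) :
    curv ((child i)^[n] q) = curv q + 2 * n * (q.1 i + q.2) + n ^ 2 * q.1 i := by
  rw [child_iterate]
  fin_cases i <;> simp [curv, Fin.sum_univ_three] <;> ring

namespace Admissible

lemma one : Admissible 1 := by
  constructor <;> norm_num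

lemma smul (h : Admissible q) {a : ℝ} (ha : 0 < a) : Admissible (a • q) := by
  constructor <;> simp only [Prod.smul_fst, Prod.smul_snd, Pi.smul_apply, smul_eq_mul,
    ← Finset.mul_sum]
  · exact fun i => mul_pos ha (h.fst_pos i)
  · exact mul_pos ha h.snd_pos
  · exact fun i => by linarith [mul_le_mul_of_nonneg_left (h.fst_le i) ha.le]
  · exact fun i => by linarith [mul_le_mul_of_nonneg_left (h.snd_add_fst_le i) ha.le]

lemma child (h : Admissible q) (i : Fin 3) : Admissible (child i q) := by
  obtain ⟨hx, hs, hle, hadd⟩ := h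
  have hxi := hx i
  constructor
  · intro j
    simp only [Apollonian.child]
    split_ifs <;> linarith [hx j]
  · exact add_pos hs hxi
  · intro j
    rw [sum_fst_child]
    simp only [Apollonian.child]
    split_ifs <;> linarith [hle i, hle j]
  · intro j
    rw [sum_fst_child]
    simp only [Apollonian.child]
    split_ifs <;> linarith [hadd i, hadd j]

lemma iterate_child (h : Admissible q) (i : Fin 3) (n : ℕ) :
    Admissible ((Apollonian.child i)^[n] q) := by
  induction n with
  | zero => exact h
  | succ n ih => rw [Function.iterate_succ_apply']; exact ih.child i

lemma sum_fst_pos (h : Admissible q) : 0 < ∑ j, q.1 j :=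
  Finset.sum_pos (fun j _ => h.fst_pos j) Finset.univ_nonempty

lemma curv_pos (h : Admissible q) : 0 < curv q := by
  have := h.sum_fst_pos
  have := h.snd_pos
  simp only [curv]; linarith

lemma curv_lt_curv_child (h : Admissible q) (i : Fin 3) :
    curv q < curv (Apollonian.child i q) := by
  rw [curv_child]; linarith [h.fst_pos i, h.snd_pos]

lemma curv_child_le (h : Admissible q) (i : Fin 3) :
    curv (Apollonian.child i q) ≤ 7 * curv q := by
  rw [curv_child]
  simp only [curv]
  linarith [h.fst_le i, h.snd_pos, h.sum_fst_pos]

lemma monotone_curv_iterate_child (h : Admissible q) (i : Fin 3) :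
    Monotone fun n => curv ((Apollonian.child i)^[n] q) := by
  refine monotone_nat_of_le_succ fun n => ?_
  rw [Function.iterate_succ_apply']
  exact ((h.iterate_child i n).curv_lt_curv_child i).le

lemma le_child (h : Admissible q) (i : Fin 3) : q ≤ Apollonian.child i q := by
  refine ⟨fun j => ?_, by simpa [Apollonian.child] using (h.fst_pos i).le⟩
  simp only [Apollonian.child]
  split_ifs with hj
  · rw [hj]
  · linarith [h.fst_pos i, h.snd_pos]

lemma smul_le_smul (h : Admissible q) {a b : ℝ} (hab : a ≤ b) : a • q ≤ b • q :=
  ⟨fun i => mul_le_mul_of_nonneg_right hab (h.fst_pos i).le,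
    mul_le_mul_of_nonneg_right hab h.snd_pos.le⟩

lemma le_smul_one (h : Admissible q) : q ≤ (2 * curv q) • (1 : Config) := by
  have := h.sum_fst_pos
  have := h.snd_pos
  constructor
  · intro i
    simp [curv]; linarith [h.fst_le i]
  · simp [curv]; linarith

lemma exists_smul_one_le (h : Admissible q) : ∃ μ : ℝ, 0 < μ ∧ μ • (1 : Config) ≤ q := by
  obtain ⟨i, hi⟩ := Finite.exists_min q.1
  refine ⟨min (q.1 i) q.2, lt_min (h.fst_pos i) h.snd_pos, fun j => ?_, ?_⟩
  · simpa using Or.inl (hi j)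
  · simp

lemma smul_one_le_child_child (h : Admissible q) {i j : Fin 3} (hij : j ≠ i) :
    (curv (Apollonian.child i q) / 5) • (1 : Config) ≤
      Apollonian.child j (Apollonian.child i q) := by
  have hs := h.snd_pos
  have hx := h.fst_pos
  have hle := h.fst_le
  have hadd := h.snd_add_fst_le
  simp only [Fin.forall_fin_succ, Fin.sum_univ_three] at hx hle hadd
  dsimp at hx hle hadd
  refine ⟨fun k => ?_, ?_⟩
  · fin_cases i <;> fin_cases j <;> simp at hij <;> fin_cases k <;>
      simp [Apollonian.child, curv, Fin.sum_univ_three] <;> linarith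
  · fin_cases i <;> fin_cases j <;> simp at hij <;>
      simp [Apollonian.child, curv, Fin.sum_univ_three] <;> linarith

end Admissible

end Config

/-! ### Sums over the tree of descendants -/

/-- The sum of `φ (curv q')` over all `q'` obtained from `q` by fewer than `n` moves. -/
noncomputable def treeSum (φ : ℝ → ℝ) : ℕ → Config → ℝ
  | 0, _ => 0
  | n + 1, q => φ (curv q) + ∑ i, treeSum φ n (child i q)

/-- The sum of `φ (curv q')` over all descendants `q'` of `q` (including `q`). -/
noncomputable def treeLimit (φ : ℝ → ℝ) (q : Config) : ℝ := ⨆ n, treeSum φ n q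

/-- Nonnegative decreasing weights whose sum over the descendants of every admissible
configuration converges. -/
structure TreeSummable (φ : ℝ → ℝ) : Prop where
  nonneg : ∀ u, 0 < u → 0 ≤ φ u
  anti : AntitoneOn φ (Set.Ioi 0)
  bddAbove : ∀ q, Admissible q → BddAbove (Set.range fun n => treeSum φ n q)

section TreeSum

variable {φ ψ : ℝ → ℝ} {q r : Config}

lemma treeSum_zero (φ : ℝ → ℝ) (q : Config) : treeSum φ 0 q = 0 := rfl

lemma treeSum_succ (φ : ℝ → ℝ) (n : ℕ) (q : Config) :
    treeSum φ (n + 1) q = φ (curv q) + ∑ i, treeSum φ n (child i q) := rfl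

lemma treeSum_le_treeSum (hφ : ∀ u, 0 < u → φ u ≤ ψ u) (n : ℕ) (h : Admissible q) :
    treeSum φ n q ≤ treeSum ψ n q := by
  induction n generalizing q with
  | zero => exact le_rfl
  | succ n ih =>
    exact add_le_add (hφ _ h.curv_pos) (Finset.sum_le_sum fun i _ => ih (h.child i))

lemma treeSum_congr (hφ : ∀ u, 0 < u → φ u = ψ u) (n : ℕ) (h : Admissible q) :
    treeSum φ n q = treeSum ψ n q :=
  le_antisymm (treeSum_le_treeSum (fun u hu => (hφ u hu).le) n h)
    (treeSum_le_treeSum (fun u hu => (hφ u hu).ge) n h)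

lemma treeSum_nonneg (hφ : ∀ u, 0 < u → 0 ≤ φ u) (n : ℕ) (h : Admissible q) :
    0 ≤ treeSum φ n q := by
  induction n generalizing q with
  | zero => exact le_rfl
  | succ n ih => exact add_nonneg (hφ _ h.curv_pos) (Finset.sum_nonneg fun i _ => ih (h.child i))

lemma monotone_treeSum (hφ : ∀ u, 0 < u → 0 ≤ φ u) (h : Admissible q) :
    Monotone fun n => treeSum φ n q := by
  refine monotone_nat_of_le_succ fun n => ?_
  induction n generalizing q with
  | zero => exact treeSum_nonneg hφ 1 h
  | succ n ih =>
    rw [treeSum_succ, treeSum_succ]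
    gcongr with i
    exact ih (h.child i)

lemma treeSum_anti (hφ : AntitoneOn φ (Set.Ioi 0)) (n : ℕ) (hq : Admissible q)
    (hr : Admissible r) (hqr : q ≤ r) : treeSum φ n r ≤ treeSum φ n q := by
  induction n generalizing q r with
  | zero => exact le_rfl
  | succ n ih =>
    exact add_le_add (hφ hq.curv_pos hr.curv_pos (curv_mono hqr))
      (Finset.sum_le_sum fun i _ => ih (hq.child i) (hr.child i) (child_mono i hqr))

lemma treeSum_smul (φ : ℝ → ℝ) (a : ℝ) (n : ℕ) (q : Config) :
    treeSum φ n (a • q) = treeSum (fun u => φ (a * u)) n q := by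
  induction n generalizing q with
  | zero => rfl
  | succ n ih => simp only [treeSum_succ, curv_smul, child_smul, ih]

lemma treeSum_add (φ ψ : ℝ → ℝ) (n : ℕ) (q : Config) :
    treeSum (fun u => φ u + ψ u) n q = treeSum φ n q + treeSum ψ n q := by
  induction n generalizing q with
  | zero => simp only [treeSum_zero, add_zero]
  | succ n ih => simp only [treeSum_succ, ih, Finset.sum_add_distrib]; ring

lemma treeSum_const_mul (φ : ℝ → ℝ) (a : ℝ) (n : ℕ) (q : Config) :
    treeSum (fun u => a * φ u) n q = a * treeSum φ n q := by
  induction n generalizing q with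
  | zero => simp [treeSum_zero]
  | succ n ih => simp only [treeSum_succ, ih, ← Finset.mul_sum, mul_add]

lemma treeSum_permute (φ : ℝ → ℝ) (n : ℕ) (σ : Equiv.Perm (Fin 3)) (q : Config) :
    treeSum φ n (permute σ q) = treeSum φ n q := by
  induction n generalizing q with
  | zero => rfl
  | succ n ih =>
    simp only [treeSum_succ, curv_permute, child_permute, ih,
      Equiv.sum_comp σ fun i => treeSum φ n (child i q)]

lemma treeSum_eq_zero (hφ : ∀ u, 1 ≤ u → φ u = 0) (n : ℕ) (h : Admissible q)
    (hq : 1 ≤ curv q) : treeSum φ n q = 0 := by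
  induction n generalizing q with
  | zero => rfl
  | succ n ih =>
    rw [treeSum_succ, hφ _ hq, zero_add]
    exact Finset.sum_eq_zero fun i _ => ih (h.child i) (hq.trans (h.curv_lt_curv_child i).le)

/-- Every move increases the curvature by at least `μ`, so a weight supported on `(0, 1)` only
sees finitely many generations. -/
lemma treeSum_add_eq (hφ : ∀ u, 1 ≤ u → φ u = 0) (h : Admissible q) {μ : ℝ}
    (hμq : μ • (1 : Config) ≤ q) (n : ℕ) (hn : 1 ≤ curv q + n * μ) (m : ℕ) :
    treeSum φ (n + m) q = treeSum φ n q := by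
  induction n generalizing q with
  | zero =>
    have hq : 1 ≤ curv q := by simpa using hn
    rw [treeSum_eq_zero hφ _ h hq, treeSum_eq_zero hφ _ h hq]
  | succ n ih =>
    rw [Nat.add_right_comm, treeSum_succ, treeSum_succ]
    congr 1
    refine Finset.sum_congr rfl fun i _ => ih (h.child i) (hμq.trans (h.le_child i)) ?_
    have hμ : μ ≤ q.2 := by simpa using hμq.2
    rw [curv_child]
    push_cast at hn
    linarith [h.fst_pos i, h.snd_pos]

lemma TreeSummable.of_eq_zero (hnonneg : ∀ u, 0 < u → 0 ≤ φ u) (hanti : AntitoneOn φ (Set.Ioi 0))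
    (hφ : ∀ u, 1 ≤ u → φ u = 0) : TreeSummable φ := by
  refine ⟨hnonneg, hanti, fun q h => ?_⟩
  obtain ⟨μ, hμ, hμq⟩ := h.exists_smul_one_le
  obtain ⟨n, hn⟩ := exists_nat_gt (1 / μ)
  rw [div_lt_iff₀ hμ] at hn
  refine ⟨treeSum φ n q, ?_⟩
  rintro _ ⟨m, rfl⟩
  rw [← treeSum_add_eq hφ h hμq n (by linarith [h.curv_pos]) m]
  exact monotone_treeSum hnonneg h (Nat.le_add_left m n)

lemma treeLimit_le {B : ℝ} (hB : ∀ n, treeSum φ n q ≤ B) : treeLimit φ q ≤ B := ciSup_le hB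

namespace TreeSummable

lemma tendsto_treeSum (hφ : TreeSummable φ) (h : Admissible q) :
    Tendsto (fun n => treeSum φ n q) atTop (nhds (treeLimit φ q)) :=
  tendsto_atTop_ciSup (monotone_treeSum hφ.nonneg h) (hφ.bddAbove q h)

lemma treeSum_le_treeLimit (hφ : TreeSummable φ) (h : Admissible q) (n : ℕ) :
    treeSum φ n q ≤ treeLimit φ q :=
  le_ciSup (hφ.bddAbove q h) n

lemma treeLimit_nonneg (hφ : TreeSummable φ) (h : Admissible q) : 0 ≤ treeLimit φ q :=
  hφ.treeSum_le_treeLimit h 0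

lemma treeLimit_eq_add_sum (hφ : TreeSummable φ) (h : Admissible q) :
    treeLimit φ q = φ (curv q) + ∑ i, treeLimit φ (child i q) := by
  have hshift := (hφ.tendsto_treeSum h).comp (tendsto_add_atTop_nat 1)
  exact tendsto_nhds_unique hshift
    (tendsto_const_nhds.add (tendsto_finsetSum _ fun i _ => hφ.tendsto_treeSum (h.child i)))

lemma treeLimit_anti (hφ : TreeSummable φ) (hq : Admissible q) (hr : Admissible r)
    (hqr : q ≤ r) : treeLimit φ r ≤ treeLimit φ q :=
  treeLimit_le fun n =>
    (treeSum_anti hφ.anti n hq hr hqr).trans (hφ.treeSum_le_treeLimit hq n)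

end TreeSummable

end TreeSum

lemma sum_le_add_two_mul {F : Fin 3 → ℝ} {a : ℝ} (i : Fin 3) (hF : ∀ j, j ≠ i → F j ≤ a) :
    ∑ j, F j ≤ F i + 2 * a := by
  rw [← Finset.add_sum_erase _ F (Finset.mem_univ i)]
  have hle := Finset.sum_le_card_nsmul (Finset.univ.erase i) F a
    fun j hj => hF j (Finset.ne_of_mem_erase hj)
  have hcard : (Finset.univ.erase i).card = 2 := by simp
  rw [hcard, nsmul_eq_mul] at hle
  exact add_le_add_right hle _

/-! ### The Poincaré series -/

/-- The weight of the Poincaré series with exponent `s`. -/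
noncomputable def negPow (s : ℝ) : ℝ → ℝ := fun u => u ^ (-s)

/-- Convergence of the Poincaré series `∑ curv q ^ (-s)` over the descendants of the
configuration `1`, hence of every admissible configuration. -/
def Converges (s : ℝ) : Prop := BddAbove (Set.range fun n => treeSum (negPow s) n 1)

section Poincare

variable {s : ℝ} {q : Config}

lemma negPow_nonneg (s : ℝ) : ∀ u, 0 < u → 0 ≤ negPow s u :=
  fun _ hu => Real.rpow_nonneg hu.le _

lemma antitoneOn_negPow (hs : 0 ≤ s) : AntitoneOn (negPow s) (Set.Ioi 0) :=
  fun _ hu _ _ huv => Real.rpow_le_rpow_of_nonpos hu huv (neg_nonpos.2 hs)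

lemma treeSum_negPow_smul (s : ℝ) {a : ℝ} (ha : 0 < a) (n : ℕ) (h : Admissible q) :
    treeSum (negPow s) n (a • q) = a ^ (-s) * treeSum (negPow s) n q := by
  rw [treeSum_smul, ← treeSum_const_mul]
  exact treeSum_congr (fun u hu => Real.mul_rpow ha.le hu.le) n h

lemma treeSum_negPow_le (hs : 0 ≤ s) {μ : ℝ} (hμ : 0 < μ) (h : Admissible q)
    (hμq : μ • (1 : Config) ≤ q) (n : ℕ) :
    treeSum (negPow s) n q ≤ μ ^ (-s) * treeSum (negPow s) n 1 := by
  rw [← treeSum_negPow_smul s hμ n Admissible.one]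
  exact treeSum_anti (antitoneOn_negPow hs) n (Admissible.one.smul hμ) h hμq

lemma Converges.treeSummable (hs : 0 ≤ s) (hconv : Converges s) : TreeSummable (negPow s) := by
  refine ⟨negPow_nonneg s, antitoneOn_negPow hs, fun q h => ?_⟩
  obtain ⟨B, hB⟩ := hconv
  obtain ⟨μ, hμ, hμq⟩ := h.exists_smul_one_le
  refine ⟨μ ^ (-s) * B, ?_⟩
  rintro _ ⟨n, rfl⟩
  exact (treeSum_negPow_le hs hμ h hμq n).trans
    (mul_le_mul_of_nonneg_left (hB ⟨n, rfl⟩) (Real.rpow_nonneg hμ.le _))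

lemma treeSum_negPow_anti {s' : ℝ} (hss : s ≤ s') (n : ℕ) (h : Admissible q)
    (hq : 1 ≤ curv q) : treeSum (negPow s') n q ≤ treeSum (negPow s) n q := by
  induction n generalizing q with
  | zero => exact le_rfl
  | succ n ih =>
    exact add_le_add (Real.rpow_le_rpow_of_exponent_le hq (neg_le_neg hss))
      (Finset.sum_le_sum fun i _ => ih (h.child i) (hq.trans (h.curv_lt_curv_child i).le))

lemma Converges.mono {s' : ℝ} (hss : s ≤ s') (hconv : Converges s) : Converges s' := by
  obtain ⟨B, hB⟩ := hconv
  refine ⟨B, ?_⟩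
  rintro _ ⟨n, rfl⟩
  exact (treeSum_negPow_anti hss n Admissible.one (by norm_num [curv_one])).trans (hB ⟨n, rfl⟩)

lemma treeLimit_negPow_smul (s : ℝ) {a : ℝ} (ha : 0 < a) (h : Admissible q) :
    treeLimit (negPow s) (a • q) = a ^ (-s) * treeLimit (negPow s) q := by
  simp only [treeLimit, treeSum_negPow_smul s ha _ h]
  rw [Real.mul_iSup_of_nonneg (Real.rpow_nonneg ha.le _)]

lemma continuous_treeSum_negPow (n : ℕ) (h : Admissible q) :
    Continuous fun s => treeSum (negPow s) n q := by
  induction n generalizing q with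
  | zero => exact continuous_const
  | succ n ih =>
    exact (continuous_const.rpow continuous_neg fun _ => Or.inl h.curv_pos.ne').add
      (continuous_finsetSum _ fun i _ => ih (h.child i))

lemma rpow_neg_le_of_treeSum_one_le {B : ℝ} (hB : ∀ n, treeSum (negPow s) n 1 ≤ B) :
    (7 / 2 : ℝ) ^ (-s) ≤ B := by
  simpa [treeSum, negPow, curv_one] using hB 1

lemma Converges.treeLimit_one_pos (hs : 0 ≤ s) (hconv : Converges s) :
    0 < treeLimit (negPow s) 1 :=
  (Real.rpow_pos_of_pos (by norm_num) _).trans_le <| rpow_neg_le_of_treeSum_one_le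
    ((hconv.treeSummable hs).treeSum_le_treeLimit Admissible.one)

end Poincare

section RunEstimate

variable {s : ℝ} {q : Config}

lemma rpow_one_sub {x : ℝ} (hx : 0 < x) (s : ℝ) : x ^ (1 - s) = x * x ^ (-s) := by
  rw [sub_eq_add_neg, Real.rpow_add hx, Real.rpow_one]

lemma one_add_sub_mul_le_rpow_neg {t u : ℝ} (ht : 0 ≤ t) (hu : 0 < u) :
    1 + t - t * u ≤ u ^ (-t) := by
  rw [Real.rpow_def_of_pos hu]
  have hlog := mul_le_mul_of_nonneg_left (Real.log_le_sub_one_of_pos hu) ht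
  linarith [Real.add_one_le_exp (Real.log u * -t)]

/-- By convexity the graph of `x ↦ x ^ (1 - s)` lies above its tangent at `b`. -/
lemma sub_one_mul_rpow_neg_mul_sub_le {a b : ℝ} (hs : 1 ≤ s) (ha : 0 < a) (hb : 0 < b) :
    (s - 1) * b ^ (-s) * (b - a) ≤ a ^ (1 - s) - b ^ (1 - s) := by
  have hbern := one_add_sub_mul_le_rpow_neg (sub_nonneg.2 hs) (div_pos ha hb)
  rw [neg_sub, Real.div_rpow ha.le hb.le, le_div_iff₀ (Real.rpow_pos_of_pos hb _)] at hbern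
  have hexpand : (1 + (s - 1) - (s - 1) * (a / b)) * b ^ (1 - s)
      = b ^ (1 - s) + (s - 1) * b ^ (-s) * (b - a) := by
    rw [rpow_one_sub hb]; field_simp; ring
  linarith

lemma curv_child_sub_curv_le (h : Admissible q) (i : Fin 3) :
    curv (child i q) - curv q ≤ curv (child i (child i q)) - curv (child i q) := by
  have hfst : (child i q).1 i = q.1 i := if_pos rfl
  have hsnd : (child i q).2 = q.2 + q.1 i := rfl
  rw [curv_child i (child i q), curv_child, hfst, hsnd]
  linarith [h.fst_pos i]

lemma treeSum_child_child_le (hs : 0 ≤ s) {B : ℝ} (hB : ∀ n, treeSum (negPow s) n 1 ≤ B)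
    (h : Admissible q) {i j : Fin 3} (hij : j ≠ i) (n : ℕ) :
    treeSum (negPow s) n (child j (child i q)) ≤ 5 ^ s * B * curv (child i q) ^ (-s) := by
  have hcurv := (h.child i).curv_pos
  refine (treeSum_negPow_le hs (div_pos hcurv (by norm_num)) ((h.child i).child j)
    (h.smul_one_le_child_child hij) n).trans
    ((mul_le_mul_of_nonneg_left (hB n) (by positivity)).trans_eq ?_)
  rw [Real.div_rpow hcurv.le (by norm_num), Real.rpow_neg (show (0 : ℝ) ≤ 5 by norm_num),
    div_inv_eq_mul]
  ring

lemma one_add_two_mul_le (hs : 0 ≤ s) (hs2 : s ≤ 2) {B : ℝ} (hB : (7 / 2 : ℝ) ^ (-s) ≤ B) :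
    1 + 2 * (5 ^ s * B) ≤ 75 * B := by
  have hle : (5 : ℝ) ^ s ≤ 5 ^ (2 : ℝ) := Real.rpow_le_rpow_of_exponent_le (by norm_num) hs2
  have hge : 1 ≤ (5 : ℝ) ^ s * (7 / 2) ^ (-s) := by
    rw [Real.rpow_neg (by norm_num), ← div_eq_mul_inv,
      ← Real.div_rpow (by norm_num) (by norm_num)]
    exact Real.one_le_rpow (by norm_num) hs
  have hpos : 0 < B := (Real.rpow_pos_of_pos (by norm_num) _).trans_le hB
  have h5 : 0 < (5 : ℝ) ^ s := by positivity
  norm_num at hle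
  nlinarith

/-- The contribution of a branch which starts with a long run of equal moves: the side branches
along the run are summed by comparison with `∫ u ^ (-s) du`. -/
lemma treeSum_child_mul_le (hs : 1 < s) (hs2 : s ≤ 2) {B : ℝ}
    (hB : ∀ n, treeSum (negPow s) n 1 ≤ B) (h : Admissible q) (i : Fin 3) (n : ℕ) :
    treeSum (negPow s) n (child i q) * (curv (child i q) - curv q) ≤
      75 / (s - 1) * B * curv q ^ (1 - s) := by
  have hs0 : 0 < s - 1 := sub_pos.2 hs
  have hB7 := rpow_neg_le_of_treeSum_one_le hB
  have hB0 : 0 < B := (Real.rpow_pos_of_pos (by norm_num) _).trans_le hB7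
  induction n generalizing q with
  | zero =>
    rw [treeSum_zero, zero_mul]
    have := Real.rpow_nonneg h.curv_pos.le (1 - s)
    positivity
  | succ n ih =>
    set X := curv (child i q) ^ (-s) with hX
    set Δ := curv (child i q) - curv q with hΔ
    have hΔ0 : 0 ≤ Δ := sub_nonneg.2 (h.curv_lt_curv_child i).le
    have hX0 : 0 ≤ X := Real.rpow_nonneg (h.child i).curv_pos.le _
    have hside : ∑ j, treeSum (negPow s) n (child j (child i q)) ≤
        treeSum (negPow s) n (child i (child i q)) + 2 * (5 ^ s * B * X) :=
      sum_le_add_two_mul i fun j hj =>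
        treeSum_child_child_le (zero_le_one.trans hs.le) hB h hj n
    have hrun : treeSum (negPow s) n (child i (child i q)) * Δ ≤
        75 / (s - 1) * B * curv (child i q) ^ (1 - s) :=
      (mul_le_mul_of_nonneg_left (curv_child_sub_curv_le h i)
        (treeSum_nonneg (negPow_nonneg s) n ((h.child i).child i))).trans (ih (h.child i))
    have htan : 75 * B * (X * Δ) ≤
        75 / (s - 1) * B * (curv q ^ (1 - s) - curv (child i q) ^ (1 - s)) := by
      refine le_trans (le_of_eq ?_) (mul_le_mul_of_nonneg_left
        (sub_one_mul_rpow_neg_mul_sub_le hs.le h.curv_pos (h.child i).curv_pos) (by positivity))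
      field_simp
      simp only [hX, hΔ]
    calc treeSum (negPow s) (n + 1) (child i q) * Δ
        ≤ (X + (treeSum (negPow s) n (child i (child i q)) + 2 * (5 ^ s * B * X))) * Δ :=
          mul_le_mul_of_nonneg_right (add_le_add_right hside X) hΔ0
      _ = treeSum (negPow s) n (child i (child i q)) * Δ + (1 + 2 * (5 ^ s * B)) * (X * Δ) := by
          ring
      _ ≤ 75 / (s - 1) * B * curv (child i q) ^ (1 - s) + 75 * B * (X * Δ) :=
          add_le_add hrun (mul_le_mul_of_nonneg_right
            (one_add_two_mul_le (zero_le_one.trans hs.le) hs2 hB7) (mul_nonneg hX0 hΔ0))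
      _ ≤ 75 / (s - 1) * B * curv q ^ (1 - s) := by linarith

lemma Converges.treeLimit_child_mul_le (hconv : Converges s) (hs : 1 < s) (hs2 : s ≤ 2)
    (h : Admissible q) (i : Fin 3) :
    treeLimit (negPow s) (child i q) * (curv (child i q) - curv q) ≤
      75 / (s - 1) * treeLimit (negPow s) 1 * curv q ^ (1 - s) := by
  have hΔ : 0 < curv (child i q) - curv q := sub_pos.2 (h.curv_lt_curv_child i)
  rw [← le_div_iff₀ hΔ]
  refine treeLimit_le fun n => ?_
  rw [le_div_iff₀ hΔ]
  exact treeSum_child_mul_le hs hs2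
    ((hconv.treeSummable (zero_le_one.trans hs.le)).treeSum_le_treeLimit Admissible.one) h i n

end RunEstimate

section CriticalExponent

variable {s : ℝ} {q : Config}

lemma treeSum_le_of_add_sum_le {φ : ℝ → ℝ} {V : Config → ℝ} (hV : ∀ q, Admissible q → 0 ≤ V q)
    (hstep : ∀ q, Admissible q → φ (curv q) + ∑ i, V (child i q) ≤ V q) (n : ℕ)
    (h : Admissible q) : treeSum φ n q ≤ V q := by
  induction n generalizing q with
  | zero => exact hV q h
  | succ n ih =>
    rw [treeSum_succ]
    exact (add_le_add_right (Finset.sum_le_sum fun i _ => ih (h.child i)) _).trans (hstep q h)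

lemma treeLimit_child_mul_rpow_le {C κ : ℝ} (hφ : TreeSummable (negPow s)) (hκ0 : 0 ≤ κ)
    (hκ1 : κ ≤ 1) (h : Admissible q) (i : Fin 3)
    (hC : treeLimit (negPow s) (child i q) * (curv (child i q) - curv q) ≤
      C * curv q ^ (1 - s)) :
    treeLimit (negPow s) (child i q) * curv (child i q) ^ κ ≤
      curv q ^ κ * treeLimit (negPow s) (child i q) + κ * C * curv q ^ (κ - s) := by
  set u := curv q
  set v := curv (child i q)
  set L := treeLimit (negPow s) (child i q)
  have hu : 0 < u := h.curv_pos
  have hv : 0 < v := (h.child i).curv_pos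
  have huκ : 0 < u ^ κ := Real.rpow_pos_of_pos hu _
  have hbern : (v / u) ^ κ ≤ 1 + κ * (v / u - 1) := by
    simpa using rpow_one_add_le_one_add_mul_self (s := v / u - 1)
      (by linarith [div_pos hv hu]) hκ0 hκ1
  rw [Real.div_rpow hv.le hu.le, div_le_iff₀ huκ] at hbern
  calc L * v ^ κ
      ≤ L * ((1 + κ * (v / u - 1)) * u ^ κ) :=
        mul_le_mul_of_nonneg_left hbern (hφ.treeLimit_nonneg (h.child i))
    _ = u ^ κ * L + κ * (u ^ κ / u) * (L * (v - u)) := by field_simp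
    _ ≤ u ^ κ * L + κ * (u ^ κ / u) * (C * u ^ (1 - s)) :=
        add_le_add_right (mul_le_mul_of_nonneg_left hC (by positivity)) _
    _ = u ^ κ * L + κ * C * u ^ (κ - s) := by
        rw [show κ - s = κ + (1 - s) - 1 by ring, Real.rpow_sub_one hu.ne', Real.rpow_add hu]
        ring

lemma sum_treeLimit_child_mul_rpow_le {C κ : ℝ} (hφ : TreeSummable (negPow s)) (hκ0 : 0 ≤ κ)
    (hκ1 : κ ≤ 1) (hκC : κ * (6 * C) ≤ 1) (h : Admissible q)
    (hC : ∀ i, treeLimit (negPow s) (child i q) * (curv (child i q) - curv q) ≤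
      C * curv q ^ (1 - s)) :
    curv q ^ (κ - s) + ∑ i, 2 * (treeLimit (negPow s) (child i q) * curv (child i q) ^ κ) ≤
      2 * (treeLimit (negPow s) q * curv q ^ κ) := by
  have hsum := Finset.sum_le_sum (s := Finset.univ) fun i _ =>
    treeLimit_child_mul_rpow_le hφ hκ0 hκ1 h i (hC i)
  simp only [Finset.sum_add_distrib, ← Finset.mul_sum, Finset.sum_const, Finset.card_univ,
    Fintype.card_fin, nsmul_eq_mul, Nat.cast_ofNat] at hsum ⊢
  have hrec : treeLimit (negPow s) q * curv q ^ κ =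
      curv q ^ (κ - s) + curv q ^ κ * ∑ i, treeLimit (negPow s) (child i q) := by
    rw [hφ.treeLimit_eq_add_sum h, sub_eq_add_neg, Real.rpow_add h.curv_pos, negPow]
    ring
  have hpos : 0 < curv q ^ (κ - s) := Real.rpow_pos_of_pos h.curv_pos _
  nlinarith

/-- If the series converges at `s`, then `treeLimit (negPow s) q * curv q ^ κ` is a Lyapunov
function for the exponent `s - κ`. -/
lemma Converges.exists_lt (hconv : Converges s) (hs : 1 < s) (hs2 : s ≤ 2) :
    ∃ t, t < s ∧ Converges t := by
  have hs0 : 0 ≤ s := zero_le_one.trans hs.le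
  have hφ := hconv.treeSummable hs0
  set C := 75 / (s - 1) * treeLimit (negPow s) 1
  have hC0 : 0 < C := mul_pos (div_pos (by norm_num) (sub_pos.2 hs)) (hconv.treeLimit_one_pos hs0)
  set κ := min (1 / (6 * C)) 1
  have hκ0 : 0 < κ := lt_min (by positivity) one_pos
  have hκC : κ * (6 * C) ≤ 1 := by rw [← le_div_iff₀ (by positivity)]; exact min_le_left _ _
  refine ⟨s - κ, by linarith, 2 * (treeLimit (negPow s) 1 * curv 1 ^ κ), ?_⟩
  rintro _ ⟨n, rfl⟩
  refine treeSum_le_of_add_sum_le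
    (V := fun q => 2 * (treeLimit (negPow s) q * curv q ^ κ))
    (fun q h => mul_nonneg zero_le_two
      (mul_nonneg (hφ.treeLimit_nonneg h) (Real.rpow_nonneg h.curv_pos.le κ)))
    (fun q h => ?_) n Admissible.one
  rw [negPow, neg_sub]
  exact sum_treeLimit_child_mul_rpow_le hφ hκ0.le (min_le_right _ _) hκC h
    fun i => hconv.treeLimit_child_mul_le hs hs2 h i

theorem exists_critical_exponent {a b : ℝ} (ha : 1 ≤ a) (hb : b ≤ 2) (hconv : Converges b)
    (hdiv : ∃ s, a < s ∧ ¬ Converges s) :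
    ∃ δ, a < δ ∧ δ < b ∧ ¬ Converges δ ∧ ∀ s, δ < s → Converges s := by
  obtain ⟨s₀, has₀, hs₀⟩ := hdiv
  have hlower : s₀ ∈ lowerBounds {s | Converges s} :=
    fun s hs => le_of_not_ge fun hle => hs₀ (hs.mono hle)
  set δ := sInf {s | Converges s}
  have haδ : a < δ := has₀.trans_le (le_csInf ⟨b, hconv⟩ hlower)
  have hδb : δ ≤ b := csInf_le ⟨s₀, hlower⟩ hconv
  have hδ : ¬ Converges δ := fun hδ => by
    obtain ⟨t, htδ, ht⟩ := hδ.exists_lt (ha.trans_lt haδ) (hδb.trans hb)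
    exact (csInf_le ⟨s₀, hlower⟩ ht).not_gt htδ
  refine ⟨δ, haδ, lt_of_le_of_ne hδb fun heq => hδ (heq ▸ hconv), hδ, fun s hs => ?_⟩
  obtain ⟨t, ht, hts⟩ := exists_lt_of_csInf_lt ⟨b, hconv⟩ hs
  exact Converges.mono hts.le ht

end CriticalExponent

/-! ### The Patterson function -/

/-- The defining properties of the normalised Poincaré series of exponent `δ`, as a function of
its starting configuration; `ε` is the weight of a single orbit point. For `ε = 0` this is the
total mass of a Patterson–Sullivan measure of dimension `δ`. -/
structure IsPattersonFunction (δ ε : ℝ) (h : Config → ℝ) : Prop where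
  map_one : h 1 = 1
  eq_add_sum : ∀ q, Admissible q → h q = ε * curv q ^ (-δ) + ∑ i, h (child i q)
  anti : ∀ q r, Admissible q → Admissible r → q ≤ r → h r ≤ h q
  map_smul : ∀ a q, 0 < a → Admissible q → h (a • q) = a ^ (-δ) * h q
  child_mul_le : ∀ q i, Admissible q →
    h (child i q) * (curv (child i q) - curv q) ≤ 75 / (δ - 1) * curv q ^ (1 - δ)

section Patterson

lemma Converges.isPattersonFunction {s : ℝ} (hconv : Converges s) (hs : 1 < s) (hs2 : s ≤ 2) :
    IsPattersonFunction s (1 / treeLimit (negPow s) 1)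
      fun q => treeLimit (negPow s) q / treeLimit (negPow s) 1 := by
  have hs0 : 0 ≤ s := zero_le_one.trans hs.le
  have hφ := hconv.treeSummable hs0
  have hpos := hconv.treeLimit_one_pos hs0
  refine ⟨div_self hpos.ne', fun q h => ?_, fun q r hq hr hqr => ?_, fun a q ha h => ?_,
    fun q i h => ?_⟩
  · rw [hφ.treeLimit_eq_add_sum h, add_div, Finset.sum_div, negPow, one_div_mul_eq_div]
  · exact div_le_div_of_nonneg_right (hφ.treeLimit_anti hq hr hqr) hpos.le
  · rw [treeLimit_negPow_smul s ha h, mul_div_assoc]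
  · rw [div_mul_eq_mul_div, div_le_iff₀ hpos]
    exact (hconv.treeLimit_child_mul_le hs hs2 h i).trans_eq (by ring)

lemma tendsto_rpow_neg {ι : Type*} {l : Filter ι} {σ : ι → ℝ} {δ u : ℝ} (hu : 0 < u)
    (hσ : Tendsto σ l (nhds δ)) : Tendsto (fun k => u ^ (-σ k)) l (nhds (u ^ (-δ))) :=
  ((Real.continuousAt_const_rpow hu.ne').tendsto).comp hσ.neg

lemma IsPattersonFunction.of_tendsto {ι : Type*} {l : Filter ι} [l.NeBot] {σ ε : ι → ℝ}
    {H : ι → Config → ℝ} {δ ε₀ : ℝ} {h : Config → ℝ} (hδ : 1 < δ)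
    (hH : ∀ᶠ k in l, IsPattersonFunction (σ k) (ε k) (H k)) (hσ : Tendsto σ l (nhds δ))
    (hε : Tendsto ε l (nhds ε₀))
    (hlim : ∀ q, Admissible q → Tendsto (fun k => H k q) l (nhds (h q))) :
    IsPattersonFunction δ ε₀ h := by
  refine ⟨?_, fun q hq => ?_, fun q r hq hr hqr => ?_, fun a q ha hq => ?_, fun q i hq => ?_⟩
  · refine tendsto_nhds_unique (hlim 1 Admissible.one) (tendsto_const_nhds.congr' ?_)
    filter_upwards [hH] with k hk using hk.map_one.symm
  · refine tendsto_nhds_unique (hlim q hq)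
      (((hε.mul (tendsto_rpow_neg hq.curv_pos hσ)).add
        (tendsto_finsetSum _ fun i _ => hlim _ (hq.child i))).congr' ?_)
    filter_upwards [hH] with k hk using (hk.eq_add_sum q hq).symm
  · refine le_of_tendsto_of_tendsto (hlim r hr) (hlim q hq) ?_
    filter_upwards [hH] with k hk using hk.anti q r hq hr hqr
  · refine tendsto_nhds_unique (hlim _ (hq.smul ha))
      (((tendsto_rpow_neg ha hσ).mul (hlim q hq)).congr' ?_)
    filter_upwards [hH] with k hk using (hk.map_smul a q ha hq).symm
  · have hpow : Tendsto (fun k => curv q ^ (1 - σ k)) l (nhds (curv q ^ (1 - δ))) :=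
      ((Real.continuousAt_const_rpow hq.curv_pos.ne').tendsto).comp (hσ.const_sub 1)
    have hconst : Tendsto (fun k => 75 / (σ k - 1)) l (nhds (75 / (δ - 1))) :=
      tendsto_const_nhds.div (hσ.sub_const 1) (sub_pos.2 hδ).ne'
    refine le_of_tendsto_of_tendsto ((hlim _ (hq.child i)).mul_const _) (hconst.mul hpow) ?_
    filter_upwards [hH] with k hk using hk.child_mul_le q i hq

namespace IsPattersonFunction

variable {δ ε : ℝ} {h : Config → ℝ} {q : Config}

lemma le_rpow (hh : IsPattersonFunction δ ε h) (hq : Admissible q) {μ : ℝ} (hμ : 0 < μ)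
    (hμq : μ • (1 : Config) ≤ q) : h q ≤ μ ^ (-δ) := by
  simpa [hh.map_smul μ 1 hμ Admissible.one, hh.map_one]
    using hh.anti _ _ (Admissible.one.smul hμ) hq hμq

lemma rpow_le (hh : IsPattersonFunction δ ε h) (hq : Admissible q) :
    (2 * curv q) ^ (-δ) ≤ h q := by
  have hpos : 0 < 2 * curv q := by linarith [hq.curv_pos]
  simpa [hh.map_smul _ 1 hpos Admissible.one, hh.map_one]
    using hh.anti _ _ hq (Admissible.one.smul hpos) hq.le_smul_one

lemma pos (hh : IsPattersonFunction δ ε h) (hq : Admissible q) : 0 < h q :=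
  (Real.rpow_pos_of_pos (by linarith [hq.curv_pos]) _).trans_le (hh.rpow_le hq)

lemma eq_sum (hh : IsPattersonFunction δ 0 h) (hq : Admissible q) :
    h q = ∑ i, h (child i q) := by
  simpa using hh.eq_add_sum q hq

end IsPattersonFunction

variable {δ : ℝ}

lemma tendsto_treeLimit_one_atTop (hδ : 0 ≤ δ) (hdiv : ¬ Converges δ)
    (hconv : ∀ s, δ < s → Converges s) :
    Tendsto (fun s => treeLimit (negPow s) 1) (nhdsWithin δ (Set.Ioi δ)) atTop := by
  rw [tendsto_atTop]
  intro B
  simp only [Converges, not_bddAbove_iff, Set.exists_range_iff] at hdiv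
  obtain ⟨n, hn⟩ := hdiv B
  have hnear : ∀ᶠ s in nhds δ, B < treeSum (negPow s) n 1 :=
    (continuous_treeSum_negPow n Admissible.one).continuousAt.eventually_const_lt hn
  filter_upwards [nhdsWithin_le_nhds hnear, self_mem_nhdsWithin] with s hs hδs
  exact hs.le.trans (((hconv s hδs).treeSummable (hδ.trans (le_of_lt hδs))).treeSum_le_treeLimit
    Admissible.one n)

lemma exists_tendsto_ultrafilter {ι : Type*} (𝒰 : Ultrafilter ι) {f : ι → ℝ} {a b : ℝ}
    (hf : ∀ᶠ k in (𝒰 : Filter ι), f k ∈ Set.Icc a b) :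
    ∃ L, Tendsto f 𝒰 (nhds L) := by
  obtain ⟨L, -, hL⟩ := isCompact_Icc.ultrafilter_le_nhds (𝒰.map f) (le_principal_iff.2 hf)
  exact ⟨L, hL⟩

/-- Patterson's construction: at the divergence exponent the normalised Poincaré series
accumulate on a function which no longer charges the orbit points. -/
theorem exists_isPattersonFunction (h1 : 1 < δ) (h2 : δ < 2) (hdiv : ¬ Converges δ)
    (hconv : ∀ s, δ < s → Converges s) : ∃ h, IsPattersonFunction δ 0 h := by
  set 𝒰 : Ultrafilter ℝ := Ultrafilter.of (nhdsWithin δ (Set.Ioi δ))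
  have h𝒰 : (𝒰 : Filter ℝ) ≤ nhdsWithin δ (Set.Ioi δ) := Ultrafilter.of_le _
  have hσ : Tendsto (fun s : ℝ => s) 𝒰 (nhds δ) := h𝒰.trans nhdsWithin_le_nhds
  have hε : Tendsto (fun s => 1 / treeLimit (negPow s) 1) 𝒰 (nhds 0) :=
    ((tendsto_treeLimit_one_atTop (by linarith) hdiv hconv).mono_left h𝒰).const_div_atTop 1
  set H : ℝ → Config → ℝ := fun s q => treeLimit (negPow s) q / treeLimit (negPow s) 1
  have hH : ∀ᶠ s in (𝒰 : Filter ℝ), IsPattersonFunction s (1 / treeLimit (negPow s) 1) (H s) := by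
    filter_upwards [h𝒰 self_mem_nhdsWithin, hσ (Iio_mem_nhds h2)] with s hs hs2
    exact (hconv s hs).isPattersonFunction (h1.trans hs) (le_of_lt hs2)
  have hlim : ∀ q, ∃ L, Admissible q → Tendsto (fun s => H s q) 𝒰 (nhds L) := by
    intro q
    by_cases hq : Admissible q
    swap
    · exact ⟨0, fun hq' => absurd hq' hq⟩
    obtain ⟨μ, hμ, hμq⟩ := hq.exists_smul_one_le
    obtain ⟨L, hL⟩ := exists_tendsto_ultrafilter 𝒰 (f := fun s => H s q) (a := 0)
      (b := μ ^ (-δ) + 1) (by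
        filter_upwards [hH, (tendsto_rpow_neg hμ hσ).eventually_lt_const (lt_add_one _)]
          with s hs hsμ
        exact ⟨(hs.pos hq).le, (hs.le_rpow hq hμ hμq).trans hsμ.le⟩)
    exact ⟨L, fun _ => hL⟩
  choose h hlim using hlim
  exact ⟨h, .of_tendsto h1 hH hσ hε hlim⟩

end Patterson

/-! ### Comparison near the cusp -/

/-- Superharmonicity with respect to the moves, on admissible configurations. -/
def Superharmonic (D : Config → ℝ) : Prop :=
  ∀ q, Admissible q → ∑ i, D (child i q) ≤ D q

/-- The shape of the limit of `child 1 ((child 0)^[n] q)` as `q` tends to zero while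
`n ^ 2 * q.1 0` tends to one. Every small configuration has descendants close to it. -/
def cusp : Config := (![1, 1, 2], 1)

section Runs

variable {δ R b : ℝ} {D h : Config → ℝ} {q : Config} {i j : Fin 3}

lemma admissible_cusp : Admissible cusp := by
  constructor <;> simp [cusp, Fin.forall_fin_succ, Fin.sum_univ_three]; norm_num

lemma curv_cusp : curv cusp = 4 := by
  simp only [curv, cusp, Fin.sum_univ_three, Matrix.cons_val]
  norm_num

namespace Superharmonic

lemma add_le (hD : Superharmonic D) (h : Admissible q) (h0 : ∀ i, 0 ≤ D (child i q))
    (hij : j ≠ i) : D (child i q) + D (child j q) ≤ D q :=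
  (Finset.add_le_sum (fun k _ => h0 k) (Finset.mem_univ i) (Finset.mem_univ j) hij.symm).trans
    (hD q h)

lemma child_le (hD : Superharmonic D) (h : Admissible q) (h0 : ∀ i, 0 ≤ D (child i q))
    (i : Fin 3) : D (child i q) ≤ D q :=
  (Finset.single_le_sum (fun k _ => h0 k) (Finset.mem_univ i)).trans (hD q h)

lemma iterate_child_le (hD : Superharmonic D) (h0 : ∀ q, Admissible q → curv q ≤ R → 0 ≤ D q)
    (h : Admissible q) (i : Fin 3) (n : ℕ) (hn : 7 * curv ((child i)^[n] q) ≤ R) :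
    D ((child i)^[n] q) ≤ D q := by
  induction n with
  | zero => exact le_rfl
  | succ n ih =>
    have hmono : curv ((child i)^[n] q) ≤ curv ((child i)^[n + 1] q) :=
      h.monotone_curv_iterate_child i n.le_succ
    refine le_trans ?_ (ih (by linarith))
    rw [Function.iterate_succ_apply']
    have hn := h.iterate_child i n
    exact hD.child_le hn (fun j => h0 _ (hn.child j) (by linarith [hn.curv_child_le j])) i

lemma mul_le_of_run (hD : Superharmonic D) (h0 : ∀ q, Admissible q → curv q ≤ R → 0 ≤ D q)
    (h : Admissible q) (hij : j ≠ i) (N : ℕ) (hN : 7 * curv ((child i)^[N] q) ≤ R)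
    (hb : ∀ n, n < N → b ≤ D (child j ((child i)^[n + 1] q))) :
    N * b ≤ D (child i q) := by
  have hpartial : ∀ m, m ≤ N → m * b + D ((child i)^[m + 1] q) ≤ D (child i q) := by
    intro m
    induction m with
    | zero => intro _; simp
    | succ m ih =>
      intro hm
      have hcurv : curv ((child i)^[m + 1] q) ≤ curv ((child i)^[N] q) :=
        h.monotone_curv_iterate_child i hm
      have hrun := h.iterate_child i (m + 1)
      have hsplit := hD.add_le hrun
        (fun k => h0 _ (hrun.child k) (by linarith [hrun.curv_child_le k])) hij
      rw [← Function.iterate_succ_apply' (child i)] at hsplit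
      push_cast
      linarith [ih (by omega), hb m (by omega)]
  have hlast : 0 ≤ D ((child i)^[N + 1] q) := by
    refine h0 _ (h.iterate_child i _) ?_
    rw [Function.iterate_succ_apply']
    linarith [(h.iterate_child i N).curv_child_le i]
  linarith [hpartial N le_rfl]

end Superharmonic

lemma le_of_run (hh : IsPattersonFunction δ 0 h) (hq : Admissible q) (N : ℕ)
    (hb : ∀ n, n < N → ∀ j, j ≠ i → h (child j ((child i)^[n + 1] q)) ≤ b) :
    h (child i q) ≤ N * (2 * b) + h ((child i)^[N + 1] q) := by
  induction N with
  | zero => simp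
  | succ N ih =>
    have hsplit := sum_le_add_two_mul i (hb N N.lt_succ_self)
    rw [← hh.eq_sum (hq.iterate_child i (N + 1)), ← Function.iterate_succ_apply' (child i)]
      at hsplit
    push_cast
    linarith [ih fun n hn => hb n (by omega)]

lemma exists_run (h : Admissible q) (i : Fin 3) :
    ∃ N : ℕ, 2 * curv q ≤ curv ((child i)^[N + 1] q) ∧ curv ((child i)^[N] q) < 2 * curv q := by
  have hex : ∃ n : ℕ, 2 * curv q ≤ curv ((child i)^[n] q) := by
    obtain ⟨n, hn⟩ := exists_nat_gt (curv q / q.2)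
    rw [div_lt_iff₀ h.snd_pos] at hn
    refine ⟨n, ?_⟩
    rw [curv_child_iterate]
    have hx := (h.fst_pos i).le
    have hs := h.snd_pos.le
    have h1 : 0 ≤ (n : ℝ) * q.1 i := by positivity
    have h2 : 0 ≤ (n : ℝ) ^ 2 * q.1 i := by positivity
    have h3 : 0 ≤ (n : ℝ) * q.2 := by positivity
    linarith
  classical
  have hzero : Nat.find hex ≠ 0 := fun h0 => by
    have hspec := Nat.find_spec hex
    rw [h0, Function.iterate_zero_apply] at hspec
    linarith [h.curv_pos]
  obtain ⟨N, hN⟩ := Nat.exists_eq_succ_of_ne_zero hzero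
  have hspec := Nat.find_spec hex
  rw [hN] at hspec
  exact ⟨N, hspec, not_le.1 (Nat.find_min hex (by omega))⟩

lemma smul_one_le_child_iterate (h : Admissible q) (hij : j ≠ i) (n : ℕ) :
    (curv q / 5) • (1 : Config) ≤ child j ((child i)^[n + 1] q) := by
  rw [Function.iterate_succ_apply']
  have hstart : curv q ≤ curv ((child i)^[n] q) := h.monotone_curv_iterate_child i n.zero_le
  refine (Admissible.one.smul_le_smul ?_).trans ((h.iterate_child i n).smul_one_le_child_child hij)
  linarith [(h.iterate_child i n).curv_lt_curv_child i]

lemma curv_div_le_curv_sub (h : Admissible q) {N : ℕ}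
    (hN : 2 * curv q ≤ curv ((child i)^[N + 1] q)) :
    curv q / (N + 1) ≤ curv ((child i)^[N + 1 + 1] q) - curv ((child i)^[N + 1] q) := by
  rw [div_le_iff₀ (by positivity)]
  rw [curv_child_iterate] at hN ⊢
  rw [curv_child_iterate]
  push_cast at *
  have hn : (0 : ℝ) ≤ N := N.cast_nonneg
  have hx := (h.fst_pos i).le
  have hs := h.snd_pos.le
  nlinarith [mul_nonneg hn hx, mul_nonneg hn hs, mul_nonneg hn (mul_nonneg hn hx)]

lemma IsPattersonFunction.iterate_child_le (hh : IsPattersonFunction δ 0 h) (hδ : 1 < δ)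
    (hq : Admissible q) {N : ℕ} (hN : 2 * curv q ≤ curv ((child i)^[N + 1] q)) :
    h ((child i)^[N + 1 + 1] q) ≤ (N + 1) * (75 / (δ - 1) * curv q ^ (-δ)) := by
  have hu := hq.curv_pos
  have hδ0 : 0 < δ - 1 := sub_pos.2 hδ
  have hend := hh.child_mul_le _ i (hq.iterate_child i (N + 1))
  rw [← Function.iterate_succ_apply' (child i)] at hend
  have hpow : curv ((child i)^[N + 1] q) ^ (1 - δ) ≤ curv q * curv q ^ (-δ) := by
    rw [← rpow_one_sub hu]
    exact Real.rpow_le_rpow_of_nonpos hu (by linarith) (by linarith)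
  have hmul : h ((child i)^[N + 1 + 1] q) * (curv q / (N + 1)) ≤
      75 / (δ - 1) * (curv q * curv q ^ (-δ)) :=
    (mul_le_mul_of_nonneg_left (curv_div_le_curv_sub hq hN)
      (hh.pos (hq.iterate_child i _)).le).trans
      (hend.trans (mul_le_mul_of_nonneg_left hpow (by positivity)))
  refine le_of_mul_le_mul_right (hmul.trans_eq ?_) (show 0 < curv q / (N + 1) by positivity)
  field_simp

/-- Both sides of the inequality are, up to constants, proportional to the length of the run. -/
lemma mul_child_le (hh : IsPattersonFunction δ 0 h) (hδ : 1 < δ) (hD : Superharmonic D)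
    (h0 : ∀ q, Admissible q → curv q ≤ R → 0 ≤ D q) (hb0 : 0 ≤ b) (hq : Admissible q)
    (hR : 98 * curv q ≤ R) (hb : ∀ r, Admissible r → (curv q / 5) • (1 : Config) ≤ r →
      r ≤ (196 * curv q) • (1 : Config) → b ≤ D r) (i : Fin 3) :
    b * h (child i q) ≤ (2 + 75 / (δ - 1)) * (curv q / 5) ^ (-δ) * D (child i q) := by
  have hu := hq.curv_pos
  obtain ⟨N, hN, hmin⟩ := exists_run hq i
  obtain ⟨j, hj⟩ := exists_ne i
  have h14 : curv ((child i)^[N + 1] q) ≤ 14 * curv q := by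
    rw [Function.iterate_succ_apply']
    linarith [(hq.iterate_child i N).curv_child_le i]
  have hlower : (N + 1) * b ≤ D (child i q) := by
    refine mod_cast hD.mul_le_of_run h0 hq hj (N + 1) (by linarith) fun n hn => ?_
    have hrun := hq.iterate_child i (n + 1)
    refine hb _ (hrun.child j) (smul_one_le_child_iterate hq hj n)
      ((hrun.child j).le_smul_one.trans (Admissible.one.smul_le_smul ?_))
    have hcurv : curv ((child i)^[n + 1] q) ≤ curv ((child i)^[N + 1] q) :=
      hq.monotone_curv_iterate_child i hn
    linarith [hrun.curv_child_le j]
  have hupper : h (child i q) ≤ (N + 1) * ((2 + 75 / (δ - 1)) * (curv q / 5) ^ (-δ)) := by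
    have hside := le_of_run hh hq (i := i) (N + 1) fun n _ k hk =>
      hh.le_rpow ((hq.iterate_child i (n + 1)).child k) (by positivity)
        (smul_one_le_child_iterate hq hk n)
    have hend := hh.iterate_child_le hδ hq hN
    have hpow : 75 / (δ - 1) * curv q ^ (-δ) ≤ 75 / (δ - 1) * (curv q / 5) ^ (-δ) :=
      mul_le_mul_of_nonneg_left
        (Real.rpow_le_rpow_of_nonpos (by positivity) (by linarith) (by linarith))
        (div_nonneg (by norm_num) (by linarith))
    have := mul_le_mul_of_nonneg_left hpow (show (0 : ℝ) ≤ N + 1 by positivity)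
    push_cast at hside
    linarith
  have hC : 0 ≤ (2 + 75 / (δ - 1)) * (curv q / 5) ^ (-δ) :=
    mul_nonneg (add_nonneg zero_le_two (div_nonneg (by norm_num) (by linarith))) (by positivity)
  linarith [mul_le_mul_of_nonneg_left hupper hb0, mul_le_mul_of_nonneg_right hlower hC]

end Runs

section Contraction

variable {δ R b η w β : ℝ} {D h : Config → ℝ} {q : Config}

lemma exists_nat_sq_mul_le_one_lt {x : ℝ} (hx : 0 < x) :
    ∃ n : ℕ, (n : ℝ) ^ 2 * x ≤ 1 ∧ 1 < ((n : ℝ) + 1) ^ 2 * x := by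
  have hr : 0 ≤ 1 / x := by positivity
  refine ⟨⌊√(1 / x)⌋₊, ?_, ?_⟩
  · rw [← le_div_iff₀ hx, ← Real.le_sqrt (Nat.cast_nonneg _) hr]
    exact Nat.floor_le (Real.sqrt_nonneg _)
  · rw [← div_lt_iff₀ hx, ← Real.sqrt_lt' (by positivity)]
    exact Nat.lt_floor_add_one _

lemma mul_le_of_sq_mul_le_one (hη : 0 < η) (hw : 2 * 10 ^ 8 * w = η ^ 2) {n : ℝ}
    (hn : n ^ 2 * (w / 35) ≤ 1) : 1960 * (w * n) ≤ η := by
  have hw0 : 0 < w := by nlinarith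
  refine (abs_le_of_sq_le_sq' ?_ hη.le).2
  calc (1960 * (w * n)) ^ 2 = 134456000 * w * (n ^ 2 * (w / 35)) := by ring
    _ ≤ 134456000 * w * 1 := by gcongr
    _ ≤ η ^ 2 := by linarith

lemma exists_child_iterate_near_cusp (hη : 0 < η) (hη1 : η < 1) (hw : 2 * 10 ^ 8 * w = η ^ 2)
    (hl : (w / 35) • (1 : Config) ≤ q) (hu : q ≤ (196 * w) • (1 : Config)) :
    ∃ n : ℕ, curv ((child 0)^[n] q) ≤ 2 ∧
      (1 - η) • cusp ≤ child 1 ((child 0)^[n] q) ∧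
      child 1 ((child 0)^[n] q) ≤ (1 + η) • cusp := by
  have hw0 : 0 < w := by nlinarith
  have hw1 : 200 * w < 1 := by nlinarith
  have hxl : ∀ i, w / 35 ≤ q.1 i := fun i => by simpa using hl.1 i
  have hxu : ∀ i, q.1 i ≤ 196 * w := fun i => by simpa using hu.1 i
  have hsl : w / 35 ≤ q.2 := by simpa using hl.2
  have hsu : q.2 ≤ 196 * w := by simpa using hu.2
  obtain ⟨n, hn1, hn2⟩ := exists_nat_sq_mul_le_one_lt (x := q.1 0) (by linarith [hxl 0])
  have hn : (1 : ℝ) ≤ n := by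
    rcases n.eq_zero_or_pos with rfl | hn
    · norm_num at hn2
      linarith [hxu 0]
    · exact_mod_cast hn
  have hwn := mul_le_of_sq_mul_le_one hη hw (n := n)
    (le_trans (by gcongr; exact hxl 0) hn1)
  have hw2 : w ≤ w * n := le_mul_of_one_le_right hw0.le hn
  have hnx : n * q.1 0 ≤ 196 * (w * n) := by nlinarith [hxu 0]
  have hns : n * q.2 ≤ 196 * (w * n) := by nlinarith
  have : 0 ≤ n * q.1 0 := mul_nonneg (by linarith) (by linarith [hxl 0])
  have : 0 ≤ n * q.2 := mul_nonneg (by linarith) (by linarith)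
  have : 1 < n ^ 2 * q.1 0 + 2 * (n * q.1 0) + q.1 0 := by linarith
  refine ⟨n, ?_, ?_⟩
  · rw [curv_child_iterate, curv, Fin.sum_univ_three]
    linarith [hxu 0, hxu 1, hxu 2]
  · rw [child_iterate]
    simp only [Prod.le_def, Pi.le_def, Fin.forall_fin_succ, child, cusp, Prod.smul_mk,
      Matrix.smul_cons, smul_eq_mul, mul_one, Matrix.smul_empty, Fin.isValue,
      Matrix.cons_val_zero, zero_ne_one, ↓reduceIte, one_ne_zero, tsub_le_iff_right,
      Fin.succ_zero_eq_one, Fin.succ_one_eq_two, Fin.reduceEq, Matrix.cons_val_succ,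
      Matrix.cons_val_fin_one, Fin.succ_ne_zero, IsEmpty.forall_iff, and_true]
    constructor <;> refine ⟨⟨?_, ?_, ?_⟩, ?_⟩ <;>
      linarith [hxu 0, hxu 1, hxu 2, hxl 0, hxl 1, hxl 2]

/-- Every configuration in a fixed compact range has a descendant near the cusp. -/
lemma Superharmonic.div_le_of_le_cusp (hD : Superharmonic D)
    (h0 : ∀ q, Admissible q → curv q ≤ 100 → 0 ≤ D q) (hδ1 : 1 < δ) (hδ2 : δ < 2)
    (hh : IsPattersonFunction δ 0 h) (hη : 0 < η) (hη1 : η < 1) (hw : 2 * 10 ^ 8 * w = η ^ 2)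
    (hβ : 0 ≤ β) (hx : ∀ x, Admissible x → (1 - η) • cusp ≤ x → x ≤ (1 + η) • cusp →
      β * h x ≤ D x) (hq : Admissible q) (hl : (w / 35) • (1 : Config) ≤ q)
    (hu : q ≤ (196 * w) • (1 : Config)) :
    β / 784 ≤ D q := by
  obtain ⟨n, hn, hnl, hnu⟩ := exists_child_iterate_near_cusp hη hη1 hw hl hu
  have hrun := hq.iterate_child 0 n
  have hx' := hrun.child 1
  have hcurv := hrun.curv_child_le 1
  have hpow : 1 / 784 ≤ h (child 1 ((child 0)^[n] q)) := calc
    (1 : ℝ) / 784 = 28 ^ (-2 : ℝ) := by rw [Real.rpow_neg (by norm_num)]; norm_num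
    _ ≤ 28 ^ (-δ) := Real.rpow_le_rpow_of_exponent_le (by norm_num) (by linarith)
    _ ≤ (2 * curv (child 1 ((child 0)^[n] q))) ^ (-δ) :=
      Real.rpow_le_rpow_of_nonpos (by linarith [hx'.curv_pos]) (by linarith) (by linarith)
    _ ≤ _ := hh.rpow_le hx'
  calc β / 784 = β * (1 / 784) := by ring
    _ ≤ β * h (child 1 ((child 0)^[n] q)) := mul_le_mul_of_nonneg_left hpow hβ
    _ ≤ D (child 1 ((child 0)^[n] q)) := hx _ hx' hnl hnu
    _ ≤ D ((child 0)^[n] q) := hD.child_le hrun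
      (fun j => h0 _ (hrun.child j) (by linarith [hrun.curv_child_le j])) 1
    _ ≤ D q := hD.iterate_child_le h0 hq 0 n (by linarith)

/-- Every sequence of moves meets the shell. -/
lemma Superharmonic.mul_le_of_shell (hD : Superharmonic D) (hh : IsPattersonFunction δ 0 h)
    (hshell : ∀ q, Admissible q → w / 7 ≤ curv q → curv q ≤ w → β * h q ≤ D q)
    (hq : Admissible q) (hqw : curv q ≤ w) : β * h q ≤ D q := by
  obtain ⟨μ, hμ, hle⟩ := hq.exists_smul_one_le
  have hdescend : ∀ (k : ℕ) (q : Config), Admissible q → μ • (1 : Config) ≤ q → curv q ≤ w →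
      w / 7 ≤ curv q + k * μ → β * h q ≤ D q := by
    intro k
    induction k with
    | zero => exact fun q hq _ hqw hk => hshell q hq (by simpa using hk) hqw
    | succ k ih =>
      intro q hq hle hqw hk
      rcases le_total (w / 7) (curv q) with hc | hc
      · exact hshell q hq hc hqw
      refine le_trans ?_ (hD q hq)
      rw [hh.eq_sum hq, Finset.mul_sum]
      refine Finset.sum_le_sum fun i _ => ih _ (hq.child i) (hle.trans (hq.le_child i)) ?_ ?_
      · linarith [hq.curv_child_le i]
      · have hs : μ ≤ q.2 := by simpa using hle.2
        rw [curv_child]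
        push_cast at hk
        linarith [hq.fst_pos i]
  obtain ⟨k, hk⟩ := exists_nat_gt (w / 7 / μ)
  rw [div_lt_iff₀ hμ] at hk
  exact hdescend k q hq hle hqw (by linarith [hq.curv_pos])

lemma exists_mul_le_of_le_cusp (hδ1 : 1 < δ) (hδ2 : δ < 2) (hh : IsPattersonFunction δ 0 h)
    (hη : 0 < η) (hη1 : η < 1) :
    ∃ ε w : ℝ, 0 < ε ∧ ε < 1 ∧ 0 < w ∧ w < 1 ∧ ∀ D, Superharmonic D →
      (∀ q, Admissible q → curv q ≤ 100 → 0 ≤ D q) → ∀ β, 0 ≤ β →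
      (∀ x, Admissible x → (1 - η) • cusp ≤ x → x ≤ (1 + η) • cusp → β * h x ≤ D x) →
      ∀ q, Admissible q → curv q ≤ w → ε * β * h q ≤ D q := by
  obtain ⟨w, hw⟩ : ∃ w, 2 * 10 ^ 8 * w = η ^ 2 := ⟨η ^ 2 / (2 * 10 ^ 8), by ring⟩
  have hw0 : 0 < w := by nlinarith
  have hw1 : w < 1 / 200 := by nlinarith
  have : 0 < δ - 1 := sub_pos.2 hδ1
  have hC : 1 ≤ (2 + 75 / (δ - 1)) * (w / 35) ^ (-δ) :=
    one_le_mul_of_one_le_of_one_le (by linarith [show 0 < 75 / (δ - 1) by positivity])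
      (Real.one_le_rpow_of_pos_of_le_one_of_nonpos (by positivity) (by linarith) (by linarith))
  refine ⟨1 / 784 / ((2 + 75 / (δ - 1)) * (w / 35) ^ (-δ)), w, by positivity,
    (div_lt_one (by linarith)).2 (by linarith), hw0, by linarith,
    fun D hD h0 β hβ hx q hq hqw => hD.mul_le_of_shell hh (fun q hq hl hu => ?_) hq hqw⟩
  have hgood : ∀ r, Admissible r → (curv q / 5) • (1 : Config) ≤ r →
      r ≤ (196 * curv q) • (1 : Config) → β / 784 ≤ D r := fun r hr hrl hru =>
    hD.div_le_of_le_cusp h0 hδ1 hδ2 hh hη hη1 hw hβ hx hr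
      ((Admissible.one.smul_le_smul (by linarith)).trans hrl)
      (hru.trans (Admissible.one.smul_le_smul (by linarith)))
  have hsum : β / 784 * h q ≤ (2 + 75 / (δ - 1)) * (curv q / 5) ^ (-δ) * D q := by
    rw [hh.eq_sum hq, Finset.mul_sum]
    refine (Finset.sum_le_sum fun i _ => mul_child_le hh hδ1 hD h0 (by positivity) hq
      (by linarith) hgood i).trans ?_
    rw [← Finset.mul_sum]
    have hu := hq.curv_pos
    exact mul_le_mul_of_nonneg_left (hD q hq) (by positivity)
  have hpow : (curv q / 5) ^ (-δ) ≤ (w / 35) ^ (-δ) :=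
    Real.rpow_le_rpow_of_nonpos (by positivity) (by linarith) (by linarith)
  have hDq := h0 q hq (by linarith)
  rw [div_mul_eq_mul_div, div_mul_eq_mul_div, div_le_iff₀' (by linarith)]
  calc 1 / 784 * β * h q = β / 784 * h q := by ring
    _ ≤ _ := hsum
    _ ≤ _ := by gcongr

lemma exists_mul_le_of_le_smul_cusp (hδ1 : 1 < δ) (hδ2 : δ < 2)
    (hh : IsPattersonFunction δ 0 h) (hη : 0 < η) (hη1 : η < 1) :
    ∃ ε ρ : ℝ, 0 < ε ∧ ε < 1 ∧ 0 < ρ ∧ ρ < 1 ∧ ∀ τ, 0 < τ → ∀ D, Superharmonic D →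
      (∀ q, Admissible q → curv q ≤ 100 * τ → 0 ≤ D q) → ∀ β,
      (∀ x, Admissible x → ((1 - η) * τ) • cusp ≤ x → x ≤ ((1 + η) * τ) • cusp →
        β * h x ≤ D x) →
      ∀ q, Admissible q → curv q ≤ ρ * (100 * τ) → ε * β * h q ≤ D q := by
  obtain ⟨ε, w, hε, hε1, hw, hw1, hmain⟩ := exists_mul_le_of_le_cusp hδ1 hδ2 hh hη hη1
  refine ⟨ε, w / 100, hε, hε1, by positivity, by linarith, fun τ hτ D hD h0 β hx q hq hqw => ?_⟩
  rcases lt_or_ge β 0 with hβ | hβ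
  · exact (mul_nonpos_of_nonpos_of_nonneg (mul_nonpos_of_nonneg_of_nonpos hε.le hβ.le)
      (hh.pos hq).le).trans (h0 q hq (by nlinarith))
  have hmono : ∀ {x y : Config}, x ≤ y → τ • x ≤ τ • y := fun hxy =>
    ⟨fun i => mul_le_mul_of_nonneg_left (hxy.1 i) hτ.le, mul_le_mul_of_nonneg_left hxy.2 hτ.le⟩
  have hbound := hmain (fun q => D (τ • q)) ?_ ?_ (β * τ ^ (-δ)) (by positivity) ?_ (τ⁻¹ • q)
    (hq.smul (inv_pos.2 hτ)) ?_
  · simp only [smul_inv_smul₀ hτ.ne'] at hbound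
    rw [hh.map_smul _ _ (inv_pos.2 hτ) hq, Real.inv_rpow hτ.le] at hbound
    refine (le_of_eq ?_).trans hbound
    field_simp
  · intro q hq
    simpa only [child_smul] using hD _ (hq.smul hτ)
  · intro q hq hqc
    exact h0 _ (hq.smul hτ) (by rw [curv_smul]; nlinarith)
  · intro x hxa hl hu
    have := hx _ (hxa.smul hτ) (by simpa only [smul_smul, mul_comm] using hmono hl)
      (by simpa only [smul_smul, mul_comm] using hmono hu)
    rw [hh.map_smul _ _ hτ hxa] at this
    linarith
  · rw [curv_smul, inv_mul_le_iff₀ hτ]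
    linarith

end Contraction

/-! ### Contraction of the oscillation -/

/-- The piecewise linear weight whose sum over the descendants is an integrated count. -/
def ramp (u : ℝ) : ℝ := max (1 - u) 0

/-- The bounds `m ≤ treeLimit ramp / h ≤ M` for configurations of curvature at most `r`. The
summand `1 / 2` makes both differences superharmonic. -/
def Bracket (h : Config → ℝ) (m M r : ℝ) : Prop :=
  ∀ q, Admissible q → curv q ≤ r →
    m * h q ≤ treeLimit ramp q ∧ treeLimit ramp q + 1 / 2 ≤ M * h q

section Bracket

variable {δ η : ℝ} {h : Config → ℝ} {q : Config}

lemma ramp_nonneg (u : ℝ) : 0 ≤ ramp u := le_max_right _ _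

lemma ramp_le_one {u : ℝ} (hu : 0 < u) : ramp u ≤ 1 := max_le (by linarith) zero_le_one

lemma ramp_of_le_one {u : ℝ} (hu : u ≤ 1) : ramp u = 1 - u := max_eq_left (by linarith)

lemma ramp_of_one_le {u : ℝ} (hu : 1 ≤ u) : ramp u = 0 := max_eq_right (by linarith)

lemma treeSummable_ramp : TreeSummable ramp :=
  .of_eq_zero (fun u _ => ramp_nonneg u)
    (fun _ _ _ _ huv => max_le_max_right _ (by linarith)) fun _ => ramp_of_one_le

lemma IsPattersonFunction.superharmonic_treeLimit_sub (hh : IsPattersonFunction δ 0 h) (m : ℝ) :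
    Superharmonic fun q => treeLimit ramp q - m * h q := by
  intro q hq
  simp only [Finset.sum_sub_distrib, ← Finset.mul_sum, ← hh.eq_sum hq]
  linarith [treeSummable_ramp.treeLimit_eq_add_sum hq, ramp_nonneg (curv q)]

lemma IsPattersonFunction.superharmonic_sub_treeLimit (hh : IsPattersonFunction δ 0 h) (M : ℝ) :
    Superharmonic fun q => M * h q - (treeLimit ramp q + 1 / 2) := by
  intro q hq
  simp only [Finset.sum_sub_distrib, Finset.sum_add_distrib, ← Finset.mul_sum, ← hh.eq_sum hq,
    Finset.sum_const, Finset.card_univ, Fintype.card_fin, nsmul_eq_mul]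
  linarith [treeSummable_ramp.treeLimit_eq_add_sum hq, ramp_le_one hq.curv_pos]

lemma treeLimit_ramp_add_le (hδ1 : 1 < δ) (hδ2 : δ < 2) (hh : IsPattersonFunction δ 0 h)
    (hq : Admissible q) (hq7 : curv q ≤ 7) : treeLimit ramp q + 1 / 2 ≤ 98 * h q := by
  have hD := (hh.superharmonic_sub_treeLimit 98).mul_le_of_shell (w := 7) (β := 0) hh ?_ hq hq7
  · linarith
  intro q hq hl hu
  have hzero : treeLimit ramp q ≤ 0 := treeLimit_le fun n =>
    (treeSum_eq_zero (fun _ => ramp_of_one_le) n hq (by linarith)).le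
  have hpow : 1 / 196 ≤ h q := calc
    (1 : ℝ) / 196 = 14 ^ (-2 : ℝ) := by rw [Real.rpow_neg (by norm_num)]; norm_num
    _ ≤ 14 ^ (-δ) := Real.rpow_le_rpow_of_exponent_le (by norm_num) (by linarith)
    _ ≤ (2 * curv q) ^ (-δ) :=
      Real.rpow_le_rpow_of_nonpos (by linarith) (by linarith) (by linarith)
    _ ≤ h q := hh.rpow_le hq
  linarith

lemma ramp_one_sub_mul_le (hη : 0 < η) (hη1 : η ≤ 1 / 2) {u : ℝ} (hu : 0 < u) :
    ramp ((1 - η) * u) ≤ ramp u + 4 * η * ramp ((1 - η) / 2 * u) := by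
  have hnonneg := mul_nonneg hη.le (ramp_nonneg ((1 - η) / 2 * u))
  rcases le_total 1 ((1 - η) * u) with h1 | h1
  · rw [ramp_of_one_le h1]
    linarith [ramp_nonneg u]
  · have hlow : 1 - u ≤ ramp u := le_max_left _ _
    rw [ramp_of_le_one h1, ramp_of_le_one (u := (1 - η) / 2 * u) (by linarith)]
    have hu2 : u ≤ 2 := by nlinarith
    nlinarith [mul_nonneg hη.le (sub_nonneg.2 h1), mul_nonneg hη.le (sub_nonneg.2 hu2)]

lemma treeLimit_ramp_one_sub_smul_le (hδ1 : 1 < δ) (hδ2 : δ < 2) (hh : IsPattersonFunction δ 0 h)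
    (hq : Admissible q) (hq7 : curv q ≤ 7) (hη : 0 < η) (hη1 : η ≤ 1 / 2) :
    treeLimit ramp ((1 - η) • q) ≤ treeLimit ramp q + 6272 * η * h q := by
  have hhalf : 0 < (1 - η) / 2 := by linarith
  have hq' := hq.smul hhalf
  have hlim : treeLimit ramp ((1 - η) • q) ≤
      treeLimit ramp q + 4 * η * treeLimit ramp (((1 - η) / 2) • q) := by
    refine treeLimit_le fun n => ?_
    rw [treeSum_smul]
    refine (treeSum_le_treeSum (fun u => ramp_one_sub_mul_le hη hη1) n hq).trans ?_
    rw [treeSum_add, treeSum_const_mul, ← treeSum_smul ramp]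
    gcongr
    exacts [treeSummable_ramp.treeSum_le_treeLimit hq n,
      treeSummable_ramp.treeSum_le_treeLimit hq' n]
  have hupper := treeLimit_ramp_add_le hδ1 hδ2 hh hq'
    (by rw [curv_smul]; nlinarith [hq.curv_pos])
  have hpow : ((1 - η) / 2) ^ (-δ) ≤ 16 := calc
    ((1 - η) / 2) ^ (-δ) ≤ (1 / 4) ^ (-δ) :=
      Real.rpow_le_rpow_of_nonpos (by norm_num) (by linarith) (by linarith)
    _ ≤ (1 / 4) ^ (-2 : ℝ) :=
      Real.rpow_le_rpow_of_exponent_ge (by norm_num) (by norm_num) (by linarith)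
    _ = 16 := by rw [Real.rpow_neg (by norm_num)]; norm_num
  rw [hh.map_smul _ _ hhalf hq] at hupper
  have hbound : treeLimit ramp (((1 - η) / 2) • q) ≤ 98 * (16 * h q) := by
    linarith [mul_le_mul_of_nonneg_right hpow (hh.pos hq).le]
  linarith [mul_le_mul_of_nonneg_left hbound hη.le]

end Bracket

section Oscillation

variable {δ η : ℝ} {h : Config → ℝ} {p x : Config}

lemma IsPattersonFunction.le_one_add_mul (hδ1 : 1 < δ) (hδ2 : δ < 2)
    (hh : IsPattersonFunction δ 0 h) (hη : 0 < η) (hη1 : η ≤ 1) (hp : Admissible p)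
    (hx : Admissible x) (hu : x ≤ (1 + η) • p) : h p ≤ (1 + 3 * η) * h x := by
  have hpos : 0 < 1 + η := by linarith
  have hanti := hh.anti _ _ hx (hp.smul hpos) hu
  rw [hh.map_smul _ _ hpos hp, Real.rpow_neg hpos.le,
    inv_mul_le_iff₀ (Real.rpow_pos_of_pos hpos δ)] at hanti
  refine hanti.trans (mul_le_mul_of_nonneg_right ?_ (hh.pos hx).le)
  calc (1 + η) ^ δ ≤ (1 + η) ^ (2 : ℝ) := Real.rpow_le_rpow_of_exponent_le (by linarith) hδ2.le
    _ = (1 + η) ^ 2 := by norm_cast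
    _ ≤ 1 + 3 * η := by nlinarith

lemma IsPattersonFunction.one_sub_mul_le (hδ2 : δ < 2)
    (hh : IsPattersonFunction δ 0 h) (hη : 0 < η) (hη1 : η < 1) (hp : Admissible p)
    (hx : Admissible x) (hl : (1 - η) • p ≤ x) : (1 - 2 * η) * h x ≤ h p := by
  have hpos : 0 < 1 - η := by linarith
  have hanti := hh.anti _ _ (hp.smul hpos) hx hl
  rw [hh.map_smul _ _ hpos hp, Real.rpow_neg hpos.le,
    le_inv_mul_iff₀ (Real.rpow_pos_of_pos hpos δ)] at hanti
  refine (mul_le_mul_of_nonneg_right ?_ (hh.pos hx).le).trans hanti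
  calc 1 - 2 * η ≤ (1 - η) ^ 2 := by nlinarith
    _ = (1 - η) ^ (2 : ℝ) := by norm_cast
    _ ≤ (1 - η) ^ δ := Real.rpow_le_rpow_of_exponent_ge hpos (by linarith) hδ2.le

lemma abs_treeLimit_ramp_sub_le (hδ1 : 1 < δ) (hδ2 : δ < 2) (hh : IsPattersonFunction δ 0 h)
    (hη : 0 < η) (hη1 : η ≤ 1 / 2) (hp : Admissible p) (hp4 : curv p ≤ 4) (hx : Admissible x)
    (hl : (1 - η) • p ≤ x) (hu : x ≤ (1 + η) • p) :
    |treeLimit ramp x - treeLimit ramp p / h p * h x| ≤ 16000 * η * h x := by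
  have hpos : 0 < 1 + η := by linarith
  have hp' := hp.smul hpos
  have hhp := hh.pos hp
  have := hp.curv_pos
  obtain ⟨g, hg⟩ : ∃ g, treeLimit ramp p / h p = g := ⟨_, rfl⟩
  have hgp : treeLimit ramp p = g * h p := by rw [← hg]; field_simp
  have hg0 : 0 ≤ g := hg ▸ div_nonneg (treeSummable_ramp.treeLimit_nonneg hp) hhp.le
  have hg98 : g ≤ 98 := by
    rw [← hg, div_le_iff₀ hhp]
    linarith [treeLimit_ramp_add_le hδ1 hδ2 hh hp (by linarith)]
  have hupper : treeLimit ramp x ≤ g * h p + 6272 * η * h p :=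
    (treeSummable_ramp.treeLimit_anti (hp.smul (by linarith)) hx hl).trans
      (hgp ▸ treeLimit_ramp_one_sub_smul_le hδ1 hδ2 hh hp (by linarith) hη hη1)
  have hlower : g * h p ≤ treeLimit ramp x + 6272 * η * h p := by
    have hη' : η / (1 + η) ≤ η := div_le_self hη.le (by linarith)
    have hlip := treeLimit_ramp_one_sub_smul_le hδ1 hδ2 hh hp' (by rw [curv_smul]; nlinarith)
      (show 0 < η / (1 + η) by positivity) (hη'.trans hη1)
    have hhp' : h ((1 + η) • p) ≤ h p :=
      hh.anti _ _ hp hp' (by simpa using hp.smul_le_smul (show (1 : ℝ) ≤ 1 + η by linarith))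
    rw [smul_smul, show (1 - η / (1 + η)) * (1 + η) = 1 by field_simp; ring, one_smul, hgp] at hlip
    linarith [treeSummable_ramp.treeLimit_anti hx hp' hu,
      mul_le_mul hη' hhp' (hh.pos hp').le hη.le]
  have hle := hh.le_one_add_mul hδ1 hδ2 hη (by linarith) hp hx hu
  have hge := hh.one_sub_mul_le hδ2 hη (by linarith) hp hx hl
  have hxη := mul_pos hη (hh.pos hx)
  have h5 : η * h p ≤ η * (5 / 2 * h x) := mul_le_mul_of_nonneg_left
    (hle.trans (mul_le_mul_of_nonneg_right (by linarith) (hh.pos hx).le)) hη.le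
  have hgx : g * (η * h x) ≤ 98 * (η * h x) := mul_le_mul_of_nonneg_right hg98 hxη.le
  rw [hg, abs_le]
  constructor <;>
    linarith [mul_le_mul_of_nonneg_left hle hg0, mul_le_mul_of_nonneg_left hge hg0]

lemma IsPattersonFunction.exists_one_le_mul (hδ1 : 1 < δ) (hh : IsPattersonFunction δ 0 h)
    {ζ : ℝ} (hζ : 0 < ζ) : ∃ r, 0 < r ∧ ∀ q, Admissible q → curv q ≤ r → 1 ≤ ζ * h q := by
  refine ⟨min (1 / 2) (ζ / 2), by positivity, fun q hq hqr => ?_⟩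
  have hpos := hq.curv_pos
  have h1 : 2 * curv q ≤ 1 := by linarith [hqr.trans (min_le_left _ _)]
  have hζ' : 2 * curv q ≤ ζ := by linarith [hqr.trans (min_le_right _ _)]
  calc 1 ≤ ζ * (2 * curv q)⁻¹ := by rwa [← div_eq_mul_inv, one_le_div (by positivity)]
    _ = ζ * (2 * curv q) ^ (-1 : ℝ) := by rw [Real.rpow_neg_one]
    _ ≤ ζ * (2 * curv q) ^ (-δ) := mul_le_mul_of_nonneg_left
      (Real.rpow_le_rpow_of_exponent_ge (by positivity) h1 (by linarith)) hζ.le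
    _ ≤ ζ * h q := mul_le_mul_of_nonneg_left (hh.rpow_le hq) hζ.le

lemma exists_bracket_near_cusp (hδ1 : 1 < δ) (hδ2 : δ < 2) (hh : IsPattersonFunction δ 0 h)
    {κ : ℝ} (hκ : 0 < κ) :
    ∃ η τ₀ : ℝ, 0 < η ∧ η ≤ 1 / 2 ∧ 0 < τ₀ ∧ ∀ τ, 0 < τ → τ < τ₀ → ∃ g : ℝ, ∀ x,
      Admissible x → ((1 - η) * τ) • cusp ≤ x → x ≤ ((1 + η) * τ) • cusp →
        (g - κ) * h x ≤ treeLimit ramp x ∧ treeLimit ramp x + 1 / 2 ≤ (g + κ) * h x := by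
  obtain ⟨r, hr, hlarge⟩ := hh.exists_one_le_mul hδ1 hκ
  have hη0 : 0 < min (1 / 2) (κ / 32000) := by positivity
  have hηκ : min (1 / 2) (κ / 32000) ≤ κ / 32000 := min_le_right _ _
  refine ⟨min (1 / 2) (κ / 32000), min 1 (r / 6), hη0, min_le_left _ _, by positivity,
    fun τ hτ hτ₀ => ⟨treeLimit ramp (τ • cusp) / h (τ • cusp), fun x hx hl hu => ?_⟩⟩
  have hτ1 : τ < 1 := hτ₀.trans_le (min_le_left _ _)
  have hτr : τ < r / 6 := hτ₀.trans_le (min_le_right _ _)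
  have habs := abs_le.1 (abs_treeLimit_ramp_sub_le hδ1 hδ2 hh hη0 (min_le_left _ _)
    (admissible_cusp.smul hτ) (by rw [curv_smul, curv_cusp]; linarith) hx
    (by rwa [smul_smul]) (by rwa [smul_smul]))
  have hxr : curv x ≤ r := (curv_mono hu).trans (by
    rw [curv_smul, curv_cusp]
    nlinarith [min_le_left (1 / 2) (κ / 32000)])
  have hκx := mul_le_mul_of_nonneg_right hηκ (hh.pos hx).le
  constructor <;> linarith [hlarge x hx hxr]

lemma exists_bracket_contraction (hδ1 : 1 < δ) (hδ2 : δ < 2) (hh : IsPattersonFunction δ 0 h)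
    {κ : ℝ} (hκ : 0 < κ) :
    ∃ ε ρ r₀ : ℝ, 0 < ε ∧ ε < 1 ∧ 0 < ρ ∧ ρ < 1 ∧ 0 < r₀ ∧ ∀ m M r, 0 < r → r < r₀ →
      Bracket h m M r → ∃ m' M', Bracket h m' M' (ρ * r) ∧
        M' - m' = (1 - ε) * (M - m) + 2 * ε * κ := by
  obtain ⟨η, τ₀, hη0, hη1, hτ₀, hcusp⟩ := exists_bracket_near_cusp hδ1 hδ2 hh hκ
  obtain ⟨ε, ρ, hε, hε1, hρ, hρ1, hspread⟩ :=
    exists_mul_le_of_le_smul_cusp hδ1 hδ2 hh hη0 (by linarith)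
  refine ⟨ε, ρ, 100 * τ₀, hε, hε1, hρ, hρ1, by positivity, fun m M r hr hr₀ hB => ?_⟩
  obtain ⟨τ, rfl⟩ : ∃ τ, r = 100 * τ := ⟨r / 100, by ring⟩
  have hτ : 0 < τ := by linarith
  obtain ⟨g, hg⟩ := hcusp τ hτ (by linarith)
  refine ⟨m + ε * (g - κ - m), M - ε * (M - g - κ), fun q hq hqr => ⟨?_, ?_⟩, by ring⟩
  · have := hspread τ hτ _ (hh.superharmonic_treeLimit_sub m)
      (fun q hq hqr => by linarith [(hB q hq hqr).1]) (g - κ - m)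
      (fun x hx hl hu => by linarith [(hg x hx hl hu).1]) q hq hqr
    linarith
  · have := hspread τ hτ _ (hh.superharmonic_sub_treeLimit M)
      (fun q hq hqr => by linarith [(hB q hq hqr).2]) (M - g - κ)
      (fun x hx hl hu => by linarith [(hg x hx hl hu).2]) q hq hqr
    linarith

lemma exists_bracket_sub_le (hδ1 : 1 < δ) (hδ2 : δ < 2) (hh : IsPattersonFunction δ 0 h)
    {κ : ℝ} (hκ : 0 < κ) : ∃ m M r, 0 < r ∧ Bracket h m M r ∧ M - m ≤ 3 * κ := by
  obtain ⟨ε, ρ, r₀, hε, hε1, hρ, hρ1, hr₀, hstep⟩ := exists_bracket_contraction hδ1 hδ2 hh hκ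
  have hiter : ∀ k : ℕ, ∃ m M r, 0 < r ∧ r < r₀ ∧ Bracket h m M r ∧
      M - m - 2 * κ ≤ (1 - ε) ^ k * 98 := by
    intro k
    induction k with
    | zero =>
      refine ⟨0, 98, min 7 (r₀ / 2), by positivity, (min_le_right _ _).trans_lt (by linarith),
        fun q hq hqr => ⟨?_, ?_⟩, by rw [pow_zero]; linarith⟩
      · rw [zero_mul]
        exact treeSummable_ramp.treeLimit_nonneg hq
      · exact treeLimit_ramp_add_le hδ1 hδ2 hh hq (hqr.trans (min_le_left _ _))
    | succ k ih =>
      obtain ⟨m, M, r, hr, hrr₀, hB, hk⟩ := ih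
      obtain ⟨m', M', hB', hM'⟩ := hstep m M r hr hrr₀ hB
      refine ⟨m', M', ρ * r, by positivity, by nlinarith, hB', ?_⟩
      rw [pow_succ]
      linarith [mul_le_mul_of_nonneg_left hk (show 0 ≤ 1 - ε by linarith)]
  obtain ⟨k, hk⟩ := exists_pow_lt_of_lt_one (show 0 < κ / 98 by positivity)
    (show 1 - ε < 1 by linarith)
  obtain ⟨m, M, r, hr, -, hB, hkB⟩ := hiter k
  exact ⟨m, M, r, hr, hB, by linarith⟩

lemma exists_mul_le_treeLimit_ramp (hδ1 : 1 < δ) (hδ2 : δ < 2) (hh : IsPattersonFunction δ 0 h) :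
    ∃ m r, 0 < m ∧ 0 < r ∧ ∀ q, Admissible q → curv q ≤ r → m * h q ≤ treeLimit ramp q := by
  obtain ⟨ε, ρ, hε, -, hρ, -, hspread⟩ :=
    exists_mul_le_of_le_smul_cusp hδ1 hδ2 hh (η := 1 / 2) (by norm_num) (by norm_num)
  have hp : Admissible (((1 - 1 / 2) * (1 / 16) : ℝ) • cusp) :=
    admissible_cusp.smul (by norm_num)
  have hhp := hh.pos hp
  refine ⟨ε * (1 / 2 / h (((1 - 1 / 2) * (1 / 16) : ℝ) • cusp)), ρ * (100 * (1 / 16)),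
    by positivity, by positivity, hspread (1 / 16) (by norm_num) (treeLimit ramp)
      (by simpa using hh.superharmonic_treeLimit_sub 0)
      (fun q hq _ => treeSummable_ramp.treeLimit_nonneg hq) _ fun x hx hl hu => ?_⟩
  have hxc := curv_mono hu
  rw [curv_smul, curv_cusp] at hxc
  calc 1 / 2 / h (((1 - 1 / 2) * (1 / 16) : ℝ) • cusp) * h x
      ≤ 1 / 2 := by
        rw [div_mul_eq_mul_div, div_le_iff₀ hhp]
        exact mul_le_mul_of_nonneg_left (hh.anti _ _ hp hx hl) (by norm_num)
    _ ≤ ramp (curv x) := le_max_of_le_left (by linarith)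
    _ = treeSum ramp 1 x := by simp [treeSum_succ, treeSum_zero]
    _ ≤ treeLimit ramp x := treeSummable_ramp.treeSum_le_treeLimit hx 1

end Oscillation

/-! ### The counting function -/

/-- The weight whose sum over the descendants counts those of curvature less than `1`. -/
noncomputable def step (u : ℝ) : ℝ := if u < 1 then 1 else 0

section MonotoneDensity

variable {α : ℝ} {A N : ℝ → ℝ} {L x : ℝ}

lemma tendsto_sub_div_rpow (hx : 0 < x) (hA : Tendsto (fun T => A T / T ^ α) atTop (nhds L)) :
    Tendsto (fun T => (A (x * T) - A T) / T ^ α) atTop (nhds (L * (x ^ α - 1))) := by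
  have hAx : Tendsto (fun T => x ^ α * (A (x * T) / (x * T) ^ α)) atTop (nhds (x ^ α * L)) :=
    (hA.comp (tendsto_id.const_mul_atTop hx)).const_mul _
  rw [show L * (x ^ α - 1) = x ^ α * L - L by ring]
  refine (hAx.sub hA).congr' ?_
  filter_upwards [eventually_gt_atTop 0] with T hT
  have := Real.rpow_pos_of_pos hx α
  have := Real.rpow_pos_of_pos hT α
  rw [Real.mul_rpow hx.le hT.le]
  field_simp

lemma tendsto_rpow_sub_one_div_sub_one (α : ℝ) :
    Tendsto (fun x : ℝ => (x ^ α - 1) / (x - 1)) (nhdsWithin 1 {1}ᶜ) (nhds α) := by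
  have hderiv : HasDerivAt (fun x : ℝ => x ^ α) α 1 := by
    simpa using Real.hasDerivAt_rpow_const (x := 1) (p := α) (Or.inl one_ne_zero)
  refine (hasDerivAt_iff_tendsto_slope.1 hderiv).congr fun x => ?_
  rw [slope_def_field, Real.one_rpow]

/-- The monotone density theorem: the hypothesis `hAN` says that `A` is an integral of the
increasing function `N`. -/
theorem tendsto_div_rpow_of_sub_le
    (hAN : ∀ x y, 0 < x → x ≤ y → (y - x) * N x ≤ A y - A x ∧ A y - A x ≤ (y - x) * N y)
    (hA : Tendsto (fun T => A T / T ^ (1 + α)) atTop (nhds L)) :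
    Tendsto (fun T => N T / T ^ α) atTop (nhds (L * (1 + α))) := by
  have hslope := (tendsto_rpow_sub_one_div_sub_one (1 + α)).const_mul L
  have hquot {x : ℝ} (hx : 0 < x) : Tendsto (fun T => (A (x * T) - A T) / ((x - 1) * T) / T ^ α)
      atTop (nhds (L * ((x ^ (1 + α) - 1) / (x - 1)))) := by
    rw [← mul_div_assoc]
    refine ((tendsto_sub_div_rpow hx hA).div_const _).congr' ?_
    filter_upwards [eventually_gt_atTop 0] with T hT
    rw [Real.rpow_add hT, Real.rpow_one]
    field_simp
  refine tendsto_order.2 ⟨fun b hb => ?_, fun b hb => ?_⟩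
  · obtain ⟨x, hxb, hx0, hx1⟩ := (((hslope.mono_left (nhdsLT_le_nhdsNE 1)).eventually_const_lt
      hb).and (Ioo_mem_nhdsLT one_pos)).exists
    filter_upwards [(hquot hx0).eventually_const_lt hxb, eventually_gt_atTop 0] with T hb' hT
    refine hb'.trans_le (div_le_div_of_nonneg_right ?_ (Real.rpow_nonneg hT.le α))
    rw [div_le_iff_of_neg (mul_neg_of_neg_of_pos (sub_neg.2 hx1) hT)]
    linarith [(hAN (x * T) T (mul_pos hx0 hT) (by nlinarith)).2]
  · obtain ⟨x, hxb, hx1 : 1 < x⟩ := (((hslope.mono_left (nhdsGT_le_nhdsNE 1)).eventually_lt_const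
      hb).and self_mem_nhdsWithin).exists
    filter_upwards [(hquot (one_pos.trans hx1)).eventually_lt_const hxb, eventually_gt_atTop 0]
      with T hb' hT
    refine (div_le_div_of_nonneg_right ?_ (Real.rpow_nonneg hT.le α)).trans_lt hb'
    rw [le_div_iff₀ (mul_pos (sub_pos.2 hx1) hT)]
    linarith [(hAN T (x * T) hT (by nlinarith)).1]

end MonotoneDensity

section Counting

variable {δ : ℝ} {h : Config → ℝ} {q : Config}

lemma exists_tendsto_of_forall_exists_eventually {α : Type*} {l : Filter α} [l.NeBot] {f : α → ℝ}
    (hf : ∀ κ > 0, ∃ m M, M - m ≤ κ ∧ ∀ᶠ x in l, m ≤ f x ∧ f x ≤ M) :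
    ∃ L, Tendsto f l (nhds L) := by
  refine cauchy_map_iff_exists_tendsto.1 (Metric.cauchy_iff.2 ⟨inferInstance, fun κ hκ => ?_⟩)
  obtain ⟨m, M, hmM, hf⟩ := hf (κ / 2) (by positivity)
  refine ⟨Set.Icc m M, hf, fun x hx y hy => ?_⟩
  exact (Real.dist_le_of_mem_Icc hx hy).trans_lt (by linarith)

lemma treeSummable_step : TreeSummable step := by
  refine .of_eq_zero (fun u _ => ?_) (fun u _ _ _ huv => ?_) fun u hu => if_neg hu.not_gt
  · unfold step
    split_ifs <;> norm_num
  · unfold step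
    split_ifs <;> linarith

lemma mul_ramp_inv_mul {x : ℝ} (hx : 0 < x) (u : ℝ) : x * ramp (x⁻¹ * u) = max (x - u) 0 := by
  rw [ramp, mul_max_of_nonneg _ _ hx.le, mul_zero, mul_sub, mul_one, mul_inv_cancel_left₀ hx.ne']

lemma step_inv_mul {x : ℝ} (hx : 0 < x) (u : ℝ) : step (x⁻¹ * u) = if u < x then 1 else 0 := by
  simp only [step, inv_mul_lt_iff₀ hx, mul_one]

lemma mul_treeLimit_step_le {x y : ℝ} (hx : 0 < x) (hxy : x ≤ y) (hq : Admissible q) :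
    (y - x) * treeLimit step (x⁻¹ • q) + x * treeLimit ramp (x⁻¹ • q) ≤
      y * treeLimit ramp (y⁻¹ • q) := by
  have hy := hx.trans_le hxy
  have hqx := hq.smul (inv_pos.2 hx)
  have hqy := hq.smul (inv_pos.2 hy)
  refine le_of_tendsto_of_tendsto'
    (((treeSummable_step.tendsto_treeSum hqx).const_mul _).add
      ((treeSummable_ramp.tendsto_treeSum hqx).const_mul x))
    ((treeSummable_ramp.tendsto_treeSum hqy).const_mul y) fun n => ?_
  simp only [treeSum_smul, ← treeSum_const_mul, ← treeSum_add]
  refine treeSum_le_treeSum (fun u _ => ?_) n hq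
  rw [mul_ramp_inv_mul hx, mul_ramp_inv_mul hy, step_inv_mul hx]
  split_ifs with hu
  · rw [max_eq_left (by linarith)]
    linarith [le_max_left (y - u) 0]
  · rw [max_eq_right (by linarith)]
    linarith [le_max_right (y - u) 0]

lemma le_mul_treeLimit_step {x y : ℝ} (hx : 0 < x) (hxy : x ≤ y) (hq : Admissible q) :
    y * treeLimit ramp (y⁻¹ • q) ≤
      (y - x) * treeLimit step (y⁻¹ • q) + x * treeLimit ramp (x⁻¹ • q) := by
  have hy := hx.trans_le hxy
  have hqx := hq.smul (inv_pos.2 hx)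
  have hqy := hq.smul (inv_pos.2 hy)
  refine le_of_tendsto_of_tendsto' ((treeSummable_ramp.tendsto_treeSum hqy).const_mul y)
    (((treeSummable_step.tendsto_treeSum hqy).const_mul _).add
      ((treeSummable_ramp.tendsto_treeSum hqx).const_mul x)) fun n => ?_
  simp only [treeSum_smul, ← treeSum_const_mul, ← treeSum_add]
  refine treeSum_le_treeSum (fun u _ => ?_) n hq
  rw [mul_ramp_inv_mul hx, mul_ramp_inv_mul hy, step_inv_mul hy]
  split_ifs with hu
  · rw [max_eq_left (by linarith)]
    linarith [le_max_left (x - u) 0]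
  · rw [max_eq_right (by linarith)]
    linarith [le_max_right (x - u) 0]

lemma IsPattersonFunction.map_inv_smul (hh : IsPattersonFunction δ 0 h) (hq : Admissible q)
    {T : ℝ} (hT : 0 < T) : h (T⁻¹ • q) = T ^ δ * h q := by
  rw [hh.map_smul _ _ (inv_pos.2 hT) hq, Real.rpow_neg (inv_pos.2 hT).le, Real.inv_rpow hT.le,
    inv_inv]

lemma eventually_curv_inv_smul_le (q : Config) {r : ℝ} (hr : 0 < r) :
    ∀ᶠ T : ℝ in atTop, curv (T⁻¹ • q) ≤ r := by
  have hlim : Tendsto (fun T : ℝ => T⁻¹ * curv q) atTop (nhds 0) := by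
    simpa using tendsto_inv_atTop_zero.mul_const (curv q)
  simpa only [curv_smul] using hlim.eventually_le_const hr

lemma exists_tendsto_treeLimit_ramp_div (hδ1 : 1 < δ) (hδ2 : δ < 2)
    (hh : IsPattersonFunction δ 0 h) (hq : Admissible q) :
    ∃ L > 0, Tendsto (fun T : ℝ => treeLimit ramp (T⁻¹ • q) / T ^ δ) atTop (nhds L) := by
  have hhq := hh.pos hq
  have hbound {P : Config → Prop} {r : ℝ} (hr : 0 < r)
      (hP : ∀ p, Admissible p → curv p ≤ r → P p) : ∀ᶠ T : ℝ in atTop, 0 < T ∧ P (T⁻¹ • q) := by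
    filter_upwards [eventually_gt_atTop 0, eventually_curv_inv_smul_le q hr] with T hT hTr
    exact ⟨hT, hP _ (hq.smul (inv_pos.2 hT)) hTr⟩
  obtain ⟨L, hL⟩ : ∃ L, Tendsto (fun T : ℝ => treeLimit ramp (T⁻¹ • q) / T ^ δ) atTop (nhds L) := by
    refine exists_tendsto_of_forall_exists_eventually fun κ hκ => ?_
    obtain ⟨m, M, r, hr, hB, hmM⟩ := exists_bracket_sub_le hδ1 hδ2 hh
      (show 0 < κ / (3 * h q) by positivity)
    refine ⟨m * h q, M * h q, ?_, ?_⟩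
    · calc M * h q - m * h q = (M - m) * h q := by ring
        _ ≤ 3 * (κ / (3 * h q)) * h q := by gcongr
        _ = κ := by field_simp
    · filter_upwards [hbound hr hB] with T ⟨hT, hl, hu⟩
      rw [hh.map_inv_smul hq hT] at hl hu
      rw [le_div_iff₀ (Real.rpow_pos_of_pos hT δ), div_le_iff₀ (Real.rpow_pos_of_pos hT δ)]
      constructor <;> linarith
  obtain ⟨m, r, hm, hr, hlow⟩ := exists_mul_le_treeLimit_ramp hδ1 hδ2 hh
  refine ⟨L, (mul_pos hm hhq).trans_le (ge_of_tendsto hL ?_), hL⟩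
  filter_upwards [hbound hr hlow] with T ⟨hT, hl⟩
  rw [hh.map_inv_smul hq hT] at hl
  rw [le_div_iff₀ (Real.rpow_pos_of_pos hT δ)]
  linarith

theorem exists_tendsto_treeLimit_step_div (hδ1 : 1 < δ) (hδ2 : δ < 2)
    (hh : IsPattersonFunction δ 0 h) (hq : Admissible q) :
    ∃ L > 0, Tendsto (fun T : ℝ => treeLimit step (T⁻¹ • q) / T ^ δ) atTop (nhds L) := by
  obtain ⟨L, hL0, hL⟩ := exists_tendsto_treeLimit_ramp_div hδ1 hδ2 hh hq
  refine ⟨L * (1 + δ), by positivity, tendsto_div_rpow_of_sub_le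
    (A := fun T => T * treeLimit ramp (T⁻¹ • q)) (fun x y hx hxy => ?_) (hL.congr' ?_)⟩
  · constructor
    · linarith [mul_treeLimit_step_le hx hxy hq]
    · linarith [le_mul_treeLimit_step hx hxy hq]
  · filter_upwards [eventually_gt_atTop 0] with T hT
    rw [Real.rpow_add hT, Real.rpow_one, mul_div_mul_left _ _ hT.ne']

end Counting

/-! ### Numerical bounds for the critical exponent -/

section Pairing

open Matrix

/-- The value at `t` of the linear form with natural coefficients `y`. -/
def pairing (t : Fin 4 → ℝ) : (Fin 4 → ℕ) →+ ℝ where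
  toFun y := ∑ k, y k * t k
  map_zero' := by simp
  map_add' y z := by simp only [Pi.add_apply, Nat.cast_add, add_mul, Finset.sum_add_distrib]

/-- The action of natural matrices on real vectors. -/
def transform (A : Matrix (Fin 4) (Fin 4) ℕ) (t : Fin 4 → ℝ) : Fin 4 → ℝ :=
  A.map (Nat.castRingHom ℝ) *ᵥ t

lemma transform_mul (A B : Matrix (Fin 4) (Fin 4) ℕ) (t : Fin 4 → ℝ) :
    transform (A * B) t = transform A (transform B t) := by
  rw [transform, transform, transform, Matrix.map_mul, mulVec_mulVec]

lemma pairing_transform (A : Matrix (Fin 4) (Fin 4) ℕ) (t : Fin 4 → ℝ) (y : Fin 4 → ℕ) :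
    pairing (transform A t) y = pairing t (y ᵥ* A) := by
  simp only [pairing, transform, AddMonoidHom.coe_mk, ZeroHom.coe_mk, mulVec, vecMul, dotProduct,
    Matrix.map_apply, Nat.coe_castRingHom, Nat.cast_sum, Nat.cast_mul, Finset.mul_sum,
    Finset.sum_mul, mul_assoc]
  exact Finset.sum_comm

lemma pairing_mono {t : Fin 4 → ℝ} (ht : ∀ k, 0 < t k) : Monotone (pairing t) :=
  fun y z hyz => show ∑ k, y k * t k ≤ ∑ k, z k * t k from Finset.sum_le_sum fun k _ =>
    mul_le_mul_of_nonneg_right (Nat.cast_le.2 (hyz k)) (ht k).le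

lemma pairing_pos {t : Fin 4 → ℝ} (ht : ∀ k, 0 < t k) {y : Fin 4 → ℕ} (hy : y ≠ 0) :
    0 < pairing t y := by
  obtain ⟨k, hk⟩ := Function.ne_iff.1 hy
  exact Finset.sum_pos' (fun k _ => mul_nonneg (Nat.cast_nonneg _) (ht k).le)
    ⟨k, Finset.mem_univ k, mul_pos (Nat.cast_pos.2 (Nat.pos_of_ne_zero hk)) (ht k)⟩

lemma transform_pos {A : Matrix (Fin 4) (Fin 4) ℕ} (hA : ∀ i, A i ≠ 0)
    {t : Fin 4 → ℝ} (ht : ∀ k, 0 < t k) (i : Fin 4) : 0 < transform A t i :=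
  pairing_pos ht (hA i)

/-- Jensen's inequality for the convex function `x ↦ x ^ (-s)`, with the weights
`Y k * u k / pairing u Y`. -/
lemma pairing_rpow_neg_mul_le {s : ℝ} (hs : 0 ≤ s) {u : Fin 4 → ℝ} (hu : ∀ k, 0 < u k)
    {X Y : Fin 4 → ℕ} (hX : ∀ k, 0 < X k) (hY : ∀ k, 0 < Y k) :
    pairing u X ^ (-s) * pairing u Y ≤
      (∑ k, Y k * u k * ((X k : ℝ) / Y k) ^ (-s)) * pairing u Y ^ (-s) := by
  have hXu := pairing_pos hu (Function.ne_iff.2 ⟨0, (hX 0).ne'⟩)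
  have hYu := pairing_pos hu (Function.ne_iff.2 ⟨0, (hY 0).ne'⟩)
  set z := pairing u X / pairing u Y with hz
  have hz0 : 0 < z := div_pos hXu hYu
  have htangent : ∀ k, z ^ (-s) * (1 + s - s * ((X k : ℝ) / Y k / z)) ≤
      ((X k : ℝ) / Y k) ^ (-s) := fun k => by
    have hr : 0 < (X k : ℝ) / Y k := div_pos (Nat.cast_pos.2 (hX k)) (Nat.cast_pos.2 (hY k))
    rw [← le_div_iff₀' (Real.rpow_pos_of_pos hz0 _), ← Real.div_rpow hr.le hz0.le]
    exact one_add_sub_mul_le_rpow_neg hs (div_pos hr hz0)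
  have hmean : ∑ k, Y k * u k * (z ^ (-s) * (1 + s - s * ((X k : ℝ) / Y k / z))) =
      z ^ (-s) * pairing u Y := by
    have hterm : ∀ k, Y k * u k * (z ^ (-s) * (1 + s - s * ((X k : ℝ) / Y k / z))) =
        z ^ (-s) * ((1 + s) * (Y k * u k) - s / z * (X k * u k)) := fun k => by
      have := (Nat.cast_pos (α := ℝ)).2 (hY k)
      field_simp
    have hXz : pairing u X = z * pairing u Y := by rw [hz, div_mul_cancel₀ _ hYu.ne']
    simp only [hterm, ← Finset.mul_sum, Finset.sum_sub_distrib]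
    change z ^ (-s) * ((1 + s) * pairing u Y - s / z * pairing u X) = _
    rw [hXz]
    field_simp
    ring
  have hsplit : pairing u X ^ (-s) = z ^ (-s) * pairing u Y ^ (-s) := by
    rw [← Real.mul_rpow hz0.le hYu.le, hz, div_mul_cancel₀ _ hYu.ne']
  rw [hsplit, mul_right_comm, ← hmean]
  exact mul_le_mul_of_nonneg_right (Finset.sum_le_sum fun k _ => mul_le_mul_of_nonneg_left
    (htangent k) (mul_nonneg (Nat.cast_nonneg _) (hu k).le)) (Real.rpow_nonneg hYu.le _)

end Pairing

section RationalPower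

variable {a b c M x y : ℕ}

lemma div_rpow_neg_div (hb : 0 < b) (hx : 0 < x) :
    (((x : ℝ) / y) ^ (-(a / b : ℝ))) ^ b = (y : ℝ) ^ a / (x : ℝ) ^ a := by
  have hb' : (b : ℝ) ≠ 0 := Nat.cast_ne_zero.2 hb.ne'
  rw [← Real.rpow_natCast, ← Real.rpow_mul (by positivity), neg_mul, div_mul_cancel₀ _ hb',
    Real.rpow_neg (by positivity), Real.rpow_natCast, div_pow, inv_div]

lemma div_rpow_neg_le_of_pow_le (hb : 0 < b) (hM : 0 < M) (hx : 0 < x)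
    (h : M ^ b * y ^ a ≤ c ^ b * x ^ a) : ((x : ℝ) / y) ^ (-(a / b : ℝ)) ≤ c / M := by
  refine le_of_pow_le_pow_left₀ hb.ne' (by positivity) ?_
  rw [div_rpow_neg_div hb hx, div_pow, div_le_div_iff₀ (by positivity) (by positivity)]
  exact_mod_cast (mul_comm _ _).trans_le h

lemma div_le_rpow_neg_of_pow_le (hb : 0 < b) (hM : 0 < M) (hx : 0 < x)
    (h : c ^ b * x ^ a ≤ M ^ b * y ^ a) : (c : ℝ) / M ≤ ((x : ℝ) / y) ^ (-(a / b : ℝ)) := by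
  refine le_of_pow_le_pow_left₀ hb.ne' (by positivity) ?_
  rw [div_rpow_neg_div hb hx, div_pow, div_le_div_iff₀ (by positivity) (by positivity)]
  exact_mod_cast h.trans_eq (mul_comm _ _)

lemma tangent_le_rpow_neg {s z c d x : ℝ} (hs : 0 ≤ s) (hz : 0 < z) (hx : 0 < x) (hc : 0 ≤ c)
    (hcz : c ≤ z ^ (-s)) (hcd : c ≤ d * z) : (1 + s) * c - s * d * x ≤ x ^ (-s) := by
  have hcd' : c / z ≤ d := (div_le_iff₀ hz).2 hcd
  have hle : (1 + s) * c - s * d * x ≤ c * (1 + s - s * (x / z)) := by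
    have := mul_le_mul_of_nonneg_right hcd' (mul_nonneg hs hx.le)
    calc (1 + s) * c - s * d * x ≤ (1 + s) * c - c / z * (s * x) := by linarith
      _ = c * (1 + s - s * (x / z)) := by ring
  rcases le_or_gt (1 + s - s * (x / z)) 0 with hneg | hpos
  · exact hle.trans ((mul_nonpos_of_nonneg_of_nonpos hc hneg).trans (Real.rpow_nonneg hx.le _))
  · calc (1 + s) * c - s * d * x ≤ z ^ (-s) * (1 + s - s * (x / z)) :=
          hle.trans (mul_le_mul_of_nonneg_right hcz hpos.le)
      _ ≤ z ^ (-s) * (x / z) ^ (-s) := mul_le_mul_of_nonneg_left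
          (one_add_sub_mul_le_rpow_neg hs (div_pos hx hz)) (Real.rpow_nonneg hz.le _)
      _ = x ^ (-s) := by
          rw [← Real.mul_rpow hz.le (div_pos hx hz).le, mul_div_cancel₀ _ hz.ne']

end RationalPower

section Branch

open Matrix

/-- The configuration reached by the moves `1`, `0` from curvatures `t 0, t 1, t 2` and
distinguished curvature `t 0 + t 1 + t 2 + 2 * t 3`. -/
def cell (t : Fin 4 → ℝ) : Config :=
  child 0 (child 1 (![t 1 + t 2, t 0 + t 2, t 0 + t 1], t 3))

/-- The matrix taking `cell t` to the configuration reached from it by `n` moves `0` and one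
other move, up to a permutation. -/
def branch (n : ℕ) : Fin 2 → Matrix (Fin 4) (Fin 4) ℕ :=
  ![!![1, 1, 1, 2;
      (n + 1) ^ 2, n ^ 2, 2 * n + 2 * n ^ 2, 2 * n + 2 * n ^ 2;
      0, 0, 1, 0;
      n + 1, n, 2 * n + 1, 2 * n + 1],
    !![0, 0, 1, 0;
      (n + 1) ^ 2, n ^ 2, 2 * n + 2 * n ^ 2, 2 * n + 2 * n ^ 2;
      1, 1, 1, 2;
      n + 1, n, 2 * n + 1, 2 * n + 1]]

/-- The common left factor of all branches but the first two. -/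
def shift : Matrix (Fin 4) (Fin 4) ℕ :=
  !![1, 0, 0, 0;
    1, 1, 1, 2;
    0, 0, 1, 0;
    1, 0, 1, 1]

lemma branch_succ (n : ℕ) (j : Fin 2) : branch (n + 1) j = shift * branch n j := by
  ext i k
  fin_cases j <;> fin_cases i <;> fin_cases k <;>
    simp [branch, shift, mul_apply, Fin.sum_univ_four] <;> ring

lemma branch_ne_zero (n : ℕ) (j : Fin 2) (i : Fin 4) : branch n j i ≠ 0 :=
  Function.ne_iff.2 ⟨if i = 0 ∨ i = 2 then 2 else 0, by
    fin_cases j <;> fin_cases i <;> simp [branch]⟩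

lemma transform_branch_pos {t : Fin 4 → ℝ} (ht : ∀ k, 0 < t k) (n : ℕ) (j : Fin 2) (k : Fin 4) :
    0 < transform (branch n j) t k :=
  transform_pos (branch_ne_zero n j) ht k

lemma cell_eq (t : Fin 4 → ℝ) : cell t =
    (![t 0 + t 1 + 2 * t 2 + 2 * t 3, 4 * t 0 + t 1 + 5 * t 2 + 4 * t 3,
      5 * t 0 + 2 * t 1 + 5 * t 2 + 6 * t 3], 2 * t 0 + t 1 + 3 * t 2 + 3 * t 3) := by
  ext i
  · fin_cases i <;> simp [cell, child] <;> ring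
  · simp [cell, child]; ring

lemma transform_branch (n : ℕ) (j : Fin 2) (t : Fin 4 → ℝ) :
    transform (branch n j) t =
      let x := t 0 + t 1 + t 2 + 2 * t 3
      let y := (n + 1) ^ 2 * t 0 + n ^ 2 * t 1 + (2 * n + 2 * n ^ 2) * (t 2 + t 3)
      let z := (n + 1) * t 0 + n * t 1 + (2 * n + 1) * (t 2 + t 3)
      if j = 0 then ![x, y, t 2, z] else ![t 2, y, x, z] := by
  ext i
  fin_cases j <;> fin_cases i <;>
    simp [branch, transform, mulVec, dotProduct, Fin.sum_univ_four] <;> ring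

lemma exists_child_iterate_cell (t : Fin 4 → ℝ) (n : ℕ) (j : Fin 2) :
    ∃ σ, child j.succ ((child 0)^[n] (cell t)) = permute σ (cell (transform (branch n j) t)) := by
  refine ⟨if j = 0 then Equiv.swap 0 1 else Equiv.swap 0 2 * Equiv.swap 0 1, ?_⟩
  rw [child_iterate, cell_eq, cell_eq, transform_branch]
  ext i
  · fin_cases j <;> fin_cases i <;>
      simp [child, permute, Equiv.swap_apply_def] <;> ring
  · fin_cases j <;> simp [child, permute] <;> ring

lemma admissible_cell {t : Fin 4 → ℝ} (ht : ∀ k, 0 < t k) : Admissible (cell t) := by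
  have h0 := ht 0
  have h1 := ht 1
  have h2 := ht 2
  have h3 := ht 3
  rw [cell_eq]
  constructor
  · intro i
    fin_cases i <;>
      simp only [Fin.zero_eta, Fin.mk_one, Fin.reduceFinMk, cons_val_zero, cons_val_one,
        cons_val] <;>
      positivity
  · positivity
  · intro i; fin_cases i <;> simp [Fin.sum_univ_three] <;> linarith
  · intro i; fin_cases i <;> simp [Fin.sum_univ_three] <;> linarith

lemma sum_transform_branch_le_curv {t : Fin 4 → ℝ} (ht : ∀ k, 0 < t k) (n : ℕ) (j : Fin 2) :
    ∑ k, transform (branch n j) t k ≤ curv ((child 0)^[n] (cell t)) := by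
  have h0 := ht 0
  have h1 := ht 1
  have h2 := ht 2
  have h3 := ht 3
  have hdiff : curv ((child 0)^[n] (cell t)) = ∑ k, transform (branch n j) t k +
      ((3 * n + 6) * t 0 + (3 * n + 3) * t 1 + (6 * n + 9) * t 2 + (6 * n + 9) * t 3) := by
    rw [curv_child_iterate, cell_eq, transform_branch]
    fin_cases j <;> simp [curv, Fin.sum_univ_three, Fin.sum_univ_four] <;> ring
  rw [hdiff]
  exact le_add_of_nonneg_right (by positivity)

end Branch

section InitialRun

variable {φ : ℝ → ℝ} {q : Config}

lemma treeSum_succ_eq (φ : ℝ → ℝ) (n : ℕ) (q : Config) :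
    treeSum φ (n + 1) q = φ (curv q) + treeSum φ n (child 0 q) +
      ∑ j : Fin 2, treeSum φ n (child j.succ q) := by
  rw [treeSum_succ, Fin.sum_univ_succ, add_assoc]

/-- A descendant lies in the initial run of moves `0`, or in a branch leaving that run. -/
lemma treeSum_le_sum_run (hφ : ∀ u, 0 < u → 0 ≤ φ u) (h : Admissible q) {n m : ℕ}
    (hn : n ≤ m + 1) : treeSum φ n q ≤ ∑ k ∈ Finset.range n, (φ (curv ((child 0)^[k] q)) +
      ∑ j : Fin 2, treeSum φ m (child j.succ ((child 0)^[k] q))) := by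
  induction n generalizing q with
  | zero => simp [treeSum_zero]
  | succ n ih =>
    rw [treeSum_succ_eq, Finset.sum_range_succ']
    have hside : ∑ j : Fin 2, treeSum φ n (child j.succ q) ≤
        ∑ j : Fin 2, treeSum φ m (child j.succ q) := Finset.sum_le_sum fun j _ =>
      monotone_treeSum hφ (h.child _) (Nat.le_of_succ_le_succ hn)
    have hrun := ih (h.child 0) (Nat.le_of_succ_le hn)
    simp only [Function.iterate_succ_apply, Function.iterate_zero_apply]
    linarith

lemma sum_run_le_treeSum (hφ : ∀ u, 0 < u → 0 ≤ φ u) (h : Admissible q) (n m : ℕ) :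
    ∑ k ∈ Finset.range n, (φ (curv ((child 0)^[k] q)) +
      ∑ j : Fin 2, treeSum φ m (child j.succ ((child 0)^[k] q))) ≤ treeSum φ (n + m) q := by
  induction n generalizing q with
  | zero => simpa using treeSum_nonneg hφ m h
  | succ n ih =>
    rw [Nat.add_right_comm, treeSum_succ_eq, Finset.sum_range_succ']
    have hside : ∑ j : Fin 2, treeSum φ m (child j.succ q) ≤
        ∑ j : Fin 2, treeSum φ (n + m) (child j.succ q) := Finset.sum_le_sum fun j _ =>
      monotone_treeSum hφ (h.child _) (Nat.le_add_left m n)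
    have hrun := ih (h.child 0)
    simp only [Function.iterate_succ_apply, Function.iterate_zero_apply]
    linarith

end InitialRun

section Cones

open Matrix

/-- Three matrices whose images of the positive orthant contain all branches. -/
def coneMatrix : Fin 3 → Matrix (Fin 4) (Fin 4) ℕ := ![branch 0 0, branch 0 1, shift]

/-- Membership in one of three open simplicial cones, on which a comparison of homogeneous
functions with linear forms can be checked on the generators. -/
def InCone (t : Fin 4 → ℝ) : Prop :=
  ∃ i u, (∀ k, 0 < u k) ∧ t = transform (coneMatrix i) u

variable {t : Fin 4 → ℝ}

lemma InCone.pos (h : InCone t) (k : Fin 4) : 0 < t k := by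
  obtain ⟨i, u, hu, rfl⟩ := h
  have hrow : ∀ i j, coneMatrix i j 0 ≠ 0 ∨ coneMatrix i j 2 ≠ 0 := by decide
  exact transform_pos (fun j => Function.ne_iff.2 <|
    (hrow i j).elim (fun h0 => ⟨0, h0⟩) fun h2 => ⟨2, h2⟩) hu k

lemma inCone_transform_branch (ht : ∀ k, 0 < t k) (n : ℕ) (j : Fin 2) :
    InCone (transform (branch n j) t) := by
  cases n with
  | zero =>
    refine ⟨j.castSucc, t, ht, ?_⟩
    fin_cases j <;> rfl
  | succ n =>
    exact ⟨2, transform (branch n j) t, transform_branch_pos ht n j, by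
      rw [branch_succ, transform_mul]; rfl⟩

end Cones

/-- Binary search for the largest number below `c + 2 ^ n` satisfying `p`. -/
def searchGreatest (p : ℕ → Bool) : ℕ → ℕ → ℕ
  | 0, c => c
  | n + 1, c =>
    if p (c + 2 ^ n) then searchGreatest p n (c + 2 ^ n) else searchGreatest p n c

/-- An approximation from below of `2 ^ n * (y / x) ^ (a / b)`, for `y ≤ x`. -/
def approxRpowDiv (a b n y x : ℕ) : ℕ :=
  searchGreatest (fun c => c ^ b * x ^ a ≤ (2 ^ n) ^ b * y ^ a) n 0

section UpperBound

open Matrix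

variable {t : Fin 4 → ℝ}

/-- Coefficients of the linear form whose power `-1.31` is a supersolution. -/
def upperWeight : Fin 4 → ℕ := ![2103, 1000, 2945, 2956]

/-- The quadratic growth of `upperWeight` along branches: `(n / 39) ^ 2` times this bounds
`upperWeight ᵥ* branch n j` from below. -/
def farWeight : Fin 4 → ℕ :=
  ![1000 * 39 ^ 2, 1000 * 39 ^ 2, 2000 * 39 ^ 2, 2000 * 39 ^ 2]

set_option maxRecDepth 10000 in
lemma exists_upper_table : ∃ (c : Fin 3 → ℕ → Fin 2 → Fin 4 → ℕ) (e : Fin 3 → Fin 4 → ℕ), ∀ i k,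
    (∀ n < 40, ∀ j, (2 ^ 17) ^ 100 * (upperWeight ᵥ* coneMatrix i) k ^ 131 ≤
      c i n j k ^ 100 * (upperWeight ᵥ* branch n j ᵥ* coneMatrix i) k ^ 131) ∧
    (2 ^ 17) ^ 100 * (upperWeight ᵥ* coneMatrix i) k ^ 131 ≤
      e i k ^ 100 * (farWeight ᵥ* coneMatrix i) k ^ 131 ∧
    1000 * (162 * ∑ n ∈ Finset.range 40, ∑ j, c i n j k + 7800 * e i k) ≤ 999 * 162 * 2 ^ 17 :=
  ⟨fun i n j k => approxRpowDiv 131 100 17 ((upperWeight ᵥ* coneMatrix i) k)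
      ((upperWeight ᵥ* branch n j ᵥ* coneMatrix i) k) + 1,
    fun i k => approxRpowDiv 131 100 17 ((upperWeight ᵥ* coneMatrix i) k)
      ((farWeight ᵥ* coneMatrix i) k) + 1, by decide +kernel⟩

lemma vecMul_coneMatrix_pos {y : Fin 4 → ℕ} (hy : ∀ k, 0 < y k) (i : Fin 3) (k : Fin 4) :
    0 < (y ᵥ* coneMatrix i) k := by
  have hcol : ∀ i k, ∃ j, 0 < coneMatrix i j k := by decide
  obtain ⟨j, hj⟩ := hcol i k
  exact Finset.sum_pos' (f := fun j => y j * coneMatrix i j k) (fun _ _ => Nat.zero_le _)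
    ⟨j, Finset.mem_univ j, mul_pos (hy j) hj⟩

lemma vecMul_branch_pos {y : Fin 4 → ℕ} (hy : ∀ k, 0 < y k) (n : ℕ) (j : Fin 2) (k : Fin 4) :
    0 < (y ᵥ* branch n j) k := by
  have hcol : ∃ i, 0 < branch n j i k :=
    ⟨if j = 0 then 0 else 2, by fin_cases j <;> fin_cases k <;> simp [branch]⟩
  obtain ⟨i, hi⟩ := hcol
  exact Finset.sum_pos' (f := fun i => y i * branch n j i k) (fun _ _ => Nat.zero_le _)
    ⟨i, Finset.mem_univ i, mul_pos (hy i) hi⟩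

lemma sum_mul_pairing_rpow_neg_le {ι : Type*} (A : Finset ι) {a b M : ℕ} (hb : 0 < b)
    (hM : 0 < M) {u : Fin 4 → ℝ} (hu : ∀ k, 0 < u k) {w : ι → ℝ} (hw : ∀ x ∈ A, 0 ≤ w x)
    {X c : ι → Fin 4 → ℕ} {Y : Fin 4 → ℕ} (hX : ∀ x ∈ A, ∀ k, 0 < X x k) (hY : ∀ k, 0 < Y k)
    (hc : ∀ x ∈ A, ∀ k, M ^ b * Y k ^ a ≤ c x k ^ b * X x k ^ a) {r : ℝ}
    (hr : ∀ k, ∑ x ∈ A, w x * (c x k / M) ≤ r) :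
    ∑ x ∈ A, w x * pairing u (X x) ^ (-(a / b : ℝ)) ≤ r * pairing u Y ^ (-(a / b : ℝ)) := by
  have hYu : 0 < pairing u Y := pairing_pos hu (Function.ne_iff.2 ⟨0, (hY 0).ne'⟩)
  have hweight : ∀ k, 0 ≤ Y k * u k := fun k => mul_nonneg (Nat.cast_nonneg _) (hu k).le
  have hterm : ∀ x ∈ A, pairing u (X x) ^ (-(a / b : ℝ)) * pairing u Y ≤
      (∑ k, Y k * u k * (c x k / M)) * pairing u Y ^ (-(a / b : ℝ)) := fun x hx =>
    (pairing_rpow_neg_mul_le (by positivity) hu (hX x hx) hY).trans <|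
      mul_le_mul_of_nonneg_right (Finset.sum_le_sum fun k _ => mul_le_mul_of_nonneg_left
        (div_rpow_neg_le_of_pow_le hb hM (hX x hx k) (hc x hx k)) (hweight k))
        (Real.rpow_nonneg hYu.le _)
  rw [← mul_le_mul_iff_left₀ hYu]
  calc (∑ x ∈ A, w x * pairing u (X x) ^ (-(a / b : ℝ))) * pairing u Y
      ≤ ∑ x ∈ A, w x *
          ((∑ k, Y k * u k * (c x k / M)) * pairing u Y ^ (-(a / b : ℝ))) := by
        rw [Finset.sum_mul]
        refine Finset.sum_le_sum fun x hx => ?_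
        rw [mul_assoc]
        exact mul_le_mul_of_nonneg_left (hterm x hx) (hw x hx)
    _ = (∑ k, Y k * u k * ∑ x ∈ A, w x * (c x k / M)) * pairing u Y ^ (-(a / b : ℝ)) := by
        simp only [Finset.mul_sum, Finset.sum_mul, ← mul_assoc]
        rw [Finset.sum_comm]
        simp only [mul_comm, mul_left_comm]
    _ ≤ (∑ k, Y k * u k * r) * pairing u Y ^ (-(a / b : ℝ)) :=
        mul_le_mul_of_nonneg_right (Finset.sum_le_sum fun k _ =>
          mul_le_mul_of_nonneg_left (hr k) (hweight k)) (Real.rpow_nonneg hYu.le _)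
    _ = r * pairing u Y ^ (-(a / b : ℝ)) * pairing u Y := by
        rw [← Finset.sum_mul]
        change pairing u Y * r * _ = _
        ring

lemma sum_range_rpow_neg_le {s : ℝ} (hs : 1 ≤ s) {N : ℕ} (hN : 0 < N) (m : ℕ) :
    (s - 1) * ∑ k ∈ Finset.range m, ((N + 1 + k : ℕ) : ℝ) ^ (-s) ≤ (N : ℝ) ^ (1 - s) := by
  suffices htel : (s - 1) * ∑ k ∈ Finset.range m, ((N + 1 + k : ℕ) : ℝ) ^ (-s) ≤
      (N : ℝ) ^ (1 - s) - ((N + m : ℕ) : ℝ) ^ (1 - s) from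
    htel.trans (sub_le_self _ (Real.rpow_nonneg (Nat.cast_nonneg _) _))
  induction m with
  | zero => simp
  | succ m ih =>
    have hstep := sub_one_mul_rpow_neg_mul_sub_le (a := ((N + m : ℕ) : ℝ))
      (b := ((N + 1 + m : ℕ) : ℝ)) hs (by positivity) (by positivity)
    have hdiff : ((N + 1 + m : ℕ) : ℝ) - ((N + m : ℕ) : ℝ) = 1 := by push_cast; ring
    rw [hdiff, mul_one] at hstep
    rw [Finset.sum_range_succ, mul_add, ← Nat.add_assoc, Nat.add_right_comm N m 1]
    linarith

lemma sq_mul_pairing_farWeight_le (ht : ∀ k, 0 < t k) (n : ℕ) (j : Fin 2) :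
    ((n : ℝ) / 39) ^ 2 * pairing t farWeight ≤ pairing (transform (branch n j) t) upperWeight := by
  have hnn : ∀ k ∈ Finset.univ, 0 ≤ (upperWeight k : ℝ) * transform (branch n j) t k := fun k _ =>
    mul_nonneg (Nat.cast_nonneg _) (transform_branch_pos ht n j k).le
  have hfar : pairing t farWeight = 39 ^ 2 * (1000 * (t 0 + t 1 + 2 * (t 2 + t 3))) := by
    simp [pairing, farWeight, Fin.sum_univ_four]
    ring
  have hone : transform (branch n j) t 1 = n ^ 2 * (t 0 + t 1 + 2 * (t 2 + t 3)) +
      ((2 * n + 1) * t 0 + 2 * n * (t 2 + t 3)) := by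
    rw [transform_branch]
    fin_cases j <;> simp <;> ring
  have hrest : 0 ≤ (2 * n + 1) * t 0 + 2 * n * (t 2 + t 3) := by
    have := ht 0
    have := ht 2
    have := ht 3
    positivity
  calc ((n : ℝ) / 39) ^ 2 * pairing t farWeight
      = 1000 * (n ^ 2 * (t 0 + t 1 + 2 * (t 2 + t 3))) := by rw [hfar]; ring
    _ ≤ upperWeight 1 * transform (branch n j) t 1 := by
      rw [hone]; simp [upperWeight]; linarith
    _ ≤ pairing (transform (branch n j) t) upperWeight :=
      Finset.single_le_sum hnn (Finset.mem_univ 1)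

lemma sum_far_branches_le (ht : ∀ k, 0 < t k) (m : ℕ) :
    ∑ n ∈ Finset.range m, ∑ j : Fin 2,
      pairing (transform (branch (40 + n) j) t) upperWeight ^ (-(131 / 100) : ℝ) ≤
    7800 / 162 * pairing t farWeight ^ (-(131 / 100) : ℝ) := by
  have hfar : 0 < pairing t farWeight := pairing_pos ht (by decide)
  have hterm : ∀ n j, pairing (transform (branch (40 + n) j) t) upperWeight ^ (-(131 / 100) : ℝ) ≤
      39 ^ (262 / 100 : ℝ) * pairing t farWeight ^ (-(131 / 100) : ℝ) *
        ((39 + 1 + n : ℕ) : ℝ) ^ (-(262 / 100) : ℝ) := fun n j => by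
    refine (Real.rpow_le_rpow_of_nonpos (by positivity)
      (sq_mul_pairing_farWeight_le ht (40 + n) j) (by norm_num)).trans_eq ?_
    rw [Real.mul_rpow (by positivity) hfar.le, ← Real.rpow_natCast, ← Real.rpow_mul (by positivity),
      Real.div_rpow (by positivity) (by norm_num)]
    norm_num
    rw [Real.rpow_neg (by norm_num : (0 : ℝ) ≤ 39)]
    field_simp
  have hsum := sum_range_rpow_neg_le (s := 262 / 100) (by norm_num) (N := 39) (by norm_num) m
  have h39 : (39 : ℝ) ^ (262 / 100 : ℝ) * (39 : ℝ) ^ (1 - 262 / 100 : ℝ) = 39 := by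
    rw [← Real.rpow_add (by norm_num)]; norm_num
  refine (Finset.sum_le_sum fun n _ => Finset.sum_le_sum fun j _ => hterm n j).trans ?_
  simp only [Finset.sum_const, Finset.card_univ, Fintype.card_fin,
    ← Finset.mul_sum, nsmul_eq_mul, Nat.cast_ofNat] at hsum ⊢
  have := mul_le_mul_of_nonneg_left hsum (by positivity : (0 : ℝ) ≤ 39 ^ (262 / 100 : ℝ) *
    pairing t farWeight ^ (-(131 / 100) : ℝ))
  rw [mul_right_comm _ _ ((39 : ℝ) ^ _), h39] at this
  linarith

lemma sum_branches_add_far_le (ht : InCone t) :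
    ∑ n ∈ Finset.range 40, ∑ j : Fin 2,
      pairing (transform (branch n j) t) upperWeight ^ (-(131 / 100) : ℝ) +
      7800 / 162 * pairing t farWeight ^ (-(131 / 100) : ℝ) ≤
    999 / 1000 * pairing t upperWeight ^ (-(131 / 100) : ℝ) := by
  obtain ⟨i, u, hu, rfl⟩ := ht
  obtain ⟨c, e, htable⟩ := exists_upper_table
  have hmem : ∀ x : ℕ × Fin 2, some x ∈ Finset.insertNone (Finset.range 40 ×ˢ Finset.univ) →
      x.1 < 40 := fun x hx => by simpa using hx
  have h := sum_mul_pairing_rpow_neg_le (a := 131) (b := 100) (M := 2 ^ 17) (r := 999 / 1000)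
    (Finset.insertNone (Finset.range 40 ×ˢ (Finset.univ : Finset (Fin 2))))
    (w := fun x => x.elim (7800 / 162) fun _ => 1)
    (X := fun x => x.elim farWeight (fun p => upperWeight ᵥ* branch p.1 p.2) ᵥ* coneMatrix i)
    (c := fun x => x.elim (e i) fun p => c i p.1 p.2) (Y := upperWeight ᵥ* coneMatrix i)
    (by norm_num) (by norm_num) hu
    (by rintro (_ | x) - <;> norm_num)
    (by
      rintro (_ | x) -
      · exact vecMul_coneMatrix_pos (by decide) i
      · exact vecMul_coneMatrix_pos (vecMul_branch_pos (by decide) x.1 x.2) i)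
    (vecMul_coneMatrix_pos (by decide) i)
    (by
      rintro (_ | x) hx k
      · exact (htable i k).2.1
      · exact (htable i k).1 x.1 (hmem x hx) x.2)
    (fun k => by
      have htotal : (1000 * (162 * ∑ n ∈ Finset.range 40, ∑ j, (c i n j k : ℝ) + 7800 * e i k)) ≤
        999 * 162 * 2 ^ 17 := by exact_mod_cast (htable i k).2.2
      simp only [Finset.sum_insertNone, Finset.sum_product, Option.elim, one_mul,
        ← Finset.sum_div]
      norm_num at htotal ⊢
      linarith)
  simp only [Finset.sum_insertNone, Finset.sum_product, Option.elim, one_mul,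
    ← pairing_transform, Nat.cast_ofNat] at h
  rwa [add_comm]

lemma sum_branches_le (ht : InCone t) (N : ℕ) :
    ∑ n ∈ Finset.range N, ∑ j : Fin 2,
      pairing (transform (branch n j) t) upperWeight ^ (-(131 / 100) : ℝ) ≤
    999 / 1000 * pairing t upperWeight ^ (-(131 / 100) : ℝ) := by
  refine (Finset.sum_le_sum_of_subset_of_nonneg (Finset.range_mono (Nat.le_add_left N 40))
    fun n _ _ => Finset.sum_nonneg fun j _ => Real.rpow_nonneg (pairing_pos
      (transform_branch_pos ht.pos n j) (by decide)).le _).trans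
    (le_trans ?_ (sum_branches_add_far_le ht))
  rw [Finset.sum_range_add]
  exact add_le_add_right (sum_far_branches_le ht.pos N) _

lemma negPow_curv_iterate_cell_le (ht : ∀ k, 0 < t k) (n : ℕ) (j : Fin 2) :
    negPow (131 / 100) (curv ((child 0)^[n] (cell t))) ≤
      3000 ^ (131 / 100 : ℝ) *
        pairing (transform (branch n j) t) upperWeight ^ (-(131 / 100) : ℝ) := by
  have ht' := transform_branch_pos ht n j
  have hpos : 0 < pairing (transform (branch n j) t) upperWeight := pairing_pos ht' (by decide)
  have hle : pairing (transform (branch n j) t) upperWeight / 3000 ≤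
      curv ((child 0)^[n] (cell t)) := by
    have hw : pairing (transform (branch n j) t) upperWeight ≤
        pairing (transform (branch n j) t) (fun _ => 3000) :=
          pairing_mono ht' (show ∀ k, upperWeight k ≤ 3000 by decide)
    have hconst : pairing (transform (branch n j) t) (fun _ => 3000) =
        3000 * ∑ k, transform (branch n j) t k := by
      rw [Finset.mul_sum]; exact_mod_cast rfl
    have := sum_transform_branch_le_curv ht n j
    rw [div_le_iff₀ (by norm_num)]
    linarith
  have hpos' : 0 < pairing (transform (branch n j) t) upperWeight / 3000 := by positivity
  refine (antitoneOn_negPow (by norm_num) hpos' (hpos'.trans_le hle) hle).trans_eq ?_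
  rw [negPow, Real.div_rpow hpos.le (by norm_num), Real.rpow_neg (by norm_num : (0 : ℝ) ≤ 3000),
    div_inv_eq_mul, mul_comm]

lemma treeSum_child_iterate_cell (φ : ℝ → ℝ) (m n : ℕ) (j : Fin 2) :
    treeSum φ m (child j.succ ((child 0)^[n] (cell t))) =
      treeSum φ m (cell (transform (branch n j) t)) := by
  obtain ⟨σ, hσ⟩ := exists_child_iterate_cell t n j
  rw [hσ, treeSum_permute]

lemma treeSum_negPow_cell_le (ht : InCone t) (n : ℕ) :
    treeSum (negPow (131 / 100)) n (cell t) ≤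
      1000 * 3000 ^ (131 / 100 : ℝ) * pairing t upperWeight ^ (-(131 / 100) : ℝ) := by
  have hnonneg : ∀ {t}, (∀ k, 0 < t k) → 0 ≤ pairing t upperWeight ^ (-(131 / 100) : ℝ) :=
    fun ht => Real.rpow_nonneg (pairing_pos ht (by decide)).le _
  induction n generalizing t with
  | zero => exact mul_nonneg (by positivity) (hnonneg ht.pos)
  | succ n ih =>
    set C : ℝ := 3000 ^ (131 / 100 : ℝ)
    have hC0 : 0 ≤ C := by positivity
    have hterm : ∀ k, negPow (131 / 100) (curv ((child 0)^[k] (cell t))) +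
        ∑ j : Fin 2, treeSum (negPow (131 / 100)) n (child j.succ ((child 0)^[k] (cell t))) ≤
        1001 * C * ∑ j, pairing (transform (branch k j) t) upperWeight ^ (-(131 / 100) : ℝ) :=
      fun k => by
      have hrun := (negPow_curv_iterate_cell_le ht.pos k 0).trans <|
        mul_le_mul_of_nonneg_left (Finset.single_le_sum (f := fun j =>
          pairing (transform (branch k j) t) upperWeight ^ (-(131 / 100) : ℝ)) (fun j _ =>
          hnonneg (transform_branch_pos ht.pos k j)) (Finset.mem_univ 0)) hC0
      have hside := Finset.sum_le_sum fun (j : Fin 2) (_ : j ∈ Finset.univ) =>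
        (treeSum_child_iterate_cell (negPow (131 / 100)) n k j).trans_le
          (ih (inCone_transform_branch ht.pos k j))
      rw [← Finset.mul_sum] at hside
      linarith
    refine (treeSum_le_sum_run (negPow_nonneg _) (admissible_cell ht.pos) le_rfl).trans
      ((Finset.sum_le_sum fun k _ => hterm k).trans ?_)
    rw [← Finset.mul_sum]
    have hbranches := mul_le_mul_of_nonneg_left (sum_branches_le ht (n + 1))
      (by positivity : 0 ≤ 1001 * C)
    have := mul_nonneg hC0 (hnonneg ht.pos)
    linarith

lemma converges_131_div_100 : Converges (131 / 100) := by
  set t := transform (branch 0 0) 1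
  have ht : InCone t := inCone_transform_branch (fun _ => one_pos) 0 0
  have h := admissible_cell ht.pos
  have hpos : 0 < 2 * curv (cell t) := mul_pos two_pos h.curv_pos
  refine ⟨(2 * curv (cell t)) ^ (131 / 100 : ℝ) *
    (1000 * 3000 ^ (131 / 100 : ℝ) * pairing t upperWeight ^ (-(131 / 100) : ℝ)), ?_⟩
  rintro _ ⟨n, rfl⟩
  have hle := (treeSum_anti (antitoneOn_negPow (by norm_num)) n h (Admissible.one.smul hpos)
    h.le_smul_one).trans (treeSum_negPow_cell_le ht n)
  rwa [treeSum_negPow_smul _ hpos n Admissible.one, Real.rpow_neg hpos.le,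
    inv_mul_le_iff₀ (Real.rpow_pos_of_pos hpos _)] at hle

end UpperBound

section LowerBound

open Matrix

variable {t : Fin 4 → ℝ}

/-- Coefficients of the linear form whose power `-108 / 83` is a subsolution. -/
def lowerWeight : Fin 4 → ℕ := ![2088, 1000, 2874, 2842]

/-- The point at which the summands of the lower bound are replaced by their tangents. -/
def tangentPoint : Fin 4 → ℕ := ![100, 213, 77, 126]

set_option maxRecDepth 10000 in
lemma exists_lower_table : ∃ c d : ℕ → Fin 2 → ℕ,
    (∀ n < 120, ∀ j, c n j ^ 83 * ((lowerWeight ᵥ* branch n j) ⬝ᵥ tangentPoint) ^ 108 ≤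
        (2 ^ 36) ^ 83 * (lowerWeight ⬝ᵥ tangentPoint) ^ 108 ∧
      c n j * (lowerWeight ⬝ᵥ tangentPoint) ≤
        d n j * ((lowerWeight ᵥ* branch n j) ⬝ᵥ tangentPoint)) ∧
    ∀ i k, (((83 * 2 ^ 36) • lowerWeight + 108 • ∑ n ∈ Finset.range 120, ∑ j,
        d n j • (lowerWeight ᵥ* branch n j)) ᵥ* coneMatrix i) k ≤
      (((191 * ∑ n ∈ Finset.range 120, ∑ j, c n j) • lowerWeight) ᵥ* coneMatrix i) k :=
  ⟨fun n j => approxRpowDiv 108 83 36 (lowerWeight ⬝ᵥ tangentPoint)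
      ((lowerWeight ᵥ* branch n j) ⬝ᵥ tangentPoint),
    fun n j => approxRpowDiv 108 83 36 (lowerWeight ⬝ᵥ tangentPoint)
      ((lowerWeight ᵥ* branch n j) ⬝ᵥ tangentPoint) * (lowerWeight ⬝ᵥ tangentPoint) /
      ((lowerWeight ᵥ* branch n j) ⬝ᵥ tangentPoint) + 1, by decide +kernel⟩

lemma one_le_sum_branches (ht : InCone t) :
    1 ≤ ∑ n ∈ Finset.range 120, ∑ j : Fin 2,
      (pairing (transform (branch n j) t) lowerWeight / pairing t lowerWeight) ^
        (-(108 / 83) : ℝ) := by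
  obtain ⟨c, d, hpow, hlinear⟩ := exists_lower_table
  set P := pairing t lowerWeight
  set X : ℕ → Fin 2 → ℝ := fun n j => pairing (transform (branch n j) t) lowerWeight
  have hP : 0 < P := pairing_pos ht.pos (by decide)
  have hX : ∀ n j, 0 < X n j := fun n j =>
    pairing_pos (transform_branch_pos ht.pos n j) (by decide)
  have hlin : 83 * 2 ^ 36 * P + 108 * ∑ n ∈ Finset.range 120, ∑ j, d n j * X n j ≤
      191 * (∑ n ∈ Finset.range 120, ∑ j, (c n j : ℝ)) * P := by
    obtain ⟨i, u, hu, rfl⟩ := ht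
    have h := pairing_mono hu (hlinear i)
    simp only [← pairing_transform, map_add, map_nsmul, map_sum] at h
    simp only [nsmul_eq_mul] at h
    push_cast at h
    linarith
  have htangent : ∀ n < 120, ∀ j, (1 + 108 / 83) * (c n j / (2 ^ 36 : ℕ)) -
      108 / 83 * (d n j / (2 ^ 36 : ℕ)) * (X n j / P) ≤ (X n j / P) ^ (-(108 / 83) : ℝ) :=
    fun n hn j => by
    have hbranch : 0 < (lowerWeight ᵥ* branch n j) ⬝ᵥ tangentPoint :=
      Finset.sum_pos (fun k _ => mul_pos (vecMul_branch_pos (by decide) n j k)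
        (by fin_cases k <;> decide)) Finset.univ_nonempty
    have hroot : 0 < lowerWeight ⬝ᵥ tangentPoint := by decide
    refine tangent_le_rpow_neg (z := ((lowerWeight ᵥ* branch n j) ⬝ᵥ tangentPoint : ℕ) /
      (lowerWeight ⬝ᵥ tangentPoint : ℕ)) (by norm_num) (by positivity) (div_pos (hX n j) hP)
      (by positivity) ?_ ?_
    · exact_mod_cast div_le_rpow_neg_of_pow_le (by norm_num) (by norm_num) hbranch (hpow n hn j).1
    · rw [div_mul_div_comm, div_le_div_iff₀ (by positivity) (by positivity)]
      exact_mod_cast by nlinarith [(hpow n hn j).2]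
  refine le_trans ?_ (Finset.sum_le_sum fun n hn => Finset.sum_le_sum fun j _ =>
    htangent n (Finset.mem_range.1 hn) j)
  have hfactor : ∀ n j, (1 + 108 / 83) * (c n j / (2 ^ 36 : ℕ)) -
      108 / 83 * (d n j / (2 ^ 36 : ℕ)) * (X n j / P) =
      (191 * c n j * P - 108 * (d n j * X n j)) / (83 * 2 ^ 36 * P) := fun n j => by
    field_simp
    push_cast
    ring
  simp only [hfactor, ← Finset.sum_div, Finset.sum_sub_distrib, ← Finset.sum_mul,
    ← Finset.mul_sum]
  rw [one_le_div (by positivity)]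
  linarith

lemma rpow_lowerWeight_le_sum_branches (ht : InCone t) :
    pairing t lowerWeight ^ (-(108 / 83) : ℝ) ≤ ∑ n ∈ Finset.range 120, ∑ j : Fin 2,
      pairing (transform (branch n j) t) lowerWeight ^ (-(108 / 83) : ℝ) := by
  have hP : 0 < pairing t lowerWeight := pairing_pos ht.pos (by decide)
  have hX : ∀ n j, 0 < pairing (transform (branch n j) t) lowerWeight := fun n j =>
    pairing_pos (transform_branch_pos ht.pos n j) (by decide)
  refine (le_mul_of_one_le_left (Real.rpow_nonneg hP.le _) (one_le_sum_branches ht)).trans_eq ?_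
  simp only [Finset.sum_mul, ← Real.mul_rpow (div_pos (hX _ _) hP).le hP.le,
    div_mul_cancel₀ _ hP.ne']

lemma curv_cell_le (ht : ∀ k, 0 < t k) : curv (cell t) ≤ pairing t lowerWeight := by
  have h0 := ht 0
  have h1 := ht 1
  have h2 := ht 2
  have h3 := ht 3
  rw [cell_eq]
  simp [curv, pairing, lowerWeight, Fin.sum_univ_three, Fin.sum_univ_four]
  linarith

lemma nat_mul_rpow_lowerWeight_le_treeSum (ht : InCone t) (m : ℕ) :
    m * pairing t lowerWeight ^ (-(108 / 83) : ℝ) ≤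
      treeSum (negPow (108 / 83)) (120 * m) (cell t) := by
  induction m generalizing t with
  | zero => simp [treeSum_zero]
  | succ m ih =>
    have hnonneg := negPow_nonneg (108 / 83)
    have h := admissible_cell ht.pos
    have hroot : pairing t lowerWeight ^ (-(108 / 83) : ℝ) ≤
        ∑ k ∈ Finset.range 120, negPow (108 / 83) (curv ((child 0)^[k] (cell t))) := by
      have hfirst := antitoneOn_negPow (s := 108 / 83) (by norm_num) h.curv_pos
        (pairing_pos ht.pos (by decide)) (curv_cell_le ht.pos)
      rw [Finset.sum_range_succ', Function.iterate_zero_apply]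
      exact hfirst.trans (le_add_of_nonneg_left (Finset.sum_nonneg fun k _ =>
        hnonneg _ (h.iterate_child 0 _).curv_pos))
    have hside : (m : ℝ) * pairing t lowerWeight ^ (-(108 / 83) : ℝ) ≤
        ∑ k ∈ Finset.range 120, ∑ j : Fin 2,
          treeSum (negPow (108 / 83)) (120 * m) (child j.succ ((child 0)^[k] (cell t))) := by
      refine (mul_le_mul_of_nonneg_left (rpow_lowerWeight_le_sum_branches ht)
        m.cast_nonneg).trans ?_
      simp only [Finset.mul_sum, treeSum_child_iterate_cell]
      exact Finset.sum_le_sum fun k _ => Finset.sum_le_sum fun j _ =>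
        ih (inCone_transform_branch ht.pos k j)
    have hrun := sum_run_le_treeSum hnonneg h 120 (120 * m)
    rw [Finset.sum_add_distrib] at hrun
    rw [Nat.mul_succ, Nat.add_comm (120 * m), Nat.cast_succ, add_mul, one_mul]
    linarith

lemma not_converges_108_div_83 : ¬ Converges (108 / 83) := by
  intro hconv
  set t := transform (branch 0 0) 1
  have ht : InCone t := inCone_transform_branch (fun _ => one_pos) 0 0
  have hpos : 0 < pairing t lowerWeight ^ (-(108 / 83) : ℝ) :=
    Real.rpow_pos_of_pos (pairing_pos ht.pos (by decide)) _
  have hsummable := hconv.treeSummable (by norm_num)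
  obtain ⟨m, hm⟩ := exists_nat_gt
    (treeLimit (negPow (108 / 83)) (cell t) / pairing t lowerWeight ^ (-(108 / 83) : ℝ))
  rw [div_lt_iff₀ hpos] at hm
  exact hm.not_ge ((nat_mul_rpow_lowerWeight_le_treeSum ht m).trans
    (hsummable.treeSum_le_treeLimit (admissible_cell ht.pos) _))

end LowerBound

/-! ### The orbit of a root quadruple -/

section Orbit

/-- The action of the generator `Sgen i` on quadruples. -/
def reflect (i : Fin 4) (v : Fin 4 → ℤ) : Fin 4 → ℤ := (Sgen i).mulVec v

/-- The result of applying successively the generators named by the letters of a word, from left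
to right. -/
def walk (v : Fin 4 → ℤ) (l : List (Fin 4)) : Fin 4 → ℤ := l.foldl (fun w i => reflect i w) v

/-- Words without two equal consecutive letters. -/
abbrev Reduced (l : List (Fin 4)) : Prop := l.IsChain (· ≠ ·)

variable {v r : Fin 4 → ℤ}

lemma reflect_apply (i : Fin 4) (v : Fin 4 → ℤ) (j : Fin 4) :
    reflect i v j = if j = i then 2 * ∑ k, v k - 3 * v i else v j := by
  fin_cases i <;> fin_cases j <;>
    simp [reflect, Sgen, Matrix.mulVec, dotProduct, Fin.sum_univ_four] <;> ring

lemma reflect_reflect (i : Fin 4) (v : Fin 4 → ℤ) : reflect i (reflect i v) = v := by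
  ext j
  fin_cases i <;> fin_cases j <;> simp [reflect_apply, Fin.sum_univ_four] <;> ring

lemma walk_append_singleton (v : Fin 4 → ℤ) (l : List (Fin 4)) (i : Fin 4) :
    walk v (l ++ [i]) = reflect i (walk v l) := by
  simp [walk]

lemma mulVec_prod_map_Sgen (v : Fin 4 → ℤ) (l : List (Fin 4)) :
    ((l.map Sgen).prod).mulVec v = walk v l.reverse := by
  induction l with
  | nil => simp [walk]
  | cons i l ih =>
    rw [List.map_cons, List.prod_cons, ← Matrix.mulVec_mulVec, ih, List.reverse_cons,
      walk_append_singleton, reflect]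

lemma exists_reduced_walk_eq (v : Fin 4 → ℤ) (l : List (Fin 4)) :
    ∃ m, Reduced m ∧ walk v m = walk v l := by
  induction l using List.reverseRecOn with
  | nil => exact ⟨[], List.isChain_nil, rfl⟩
  | append_singleton l i ih =>
    obtain ⟨m, hm, hml⟩ := ih
    rw [walk_append_singleton, ← hml]
    rcases m.eq_nil_or_concat with rfl | ⟨m, j, rfl⟩
    · exact ⟨[i], List.isChain_singleton i, rfl⟩
    · rw [List.concat_eq_append] at hm ⊢
      by_cases hij : j = i
      · exact ⟨m, hm.left_of_append, by rw [walk_append_singleton, hij, reflect_reflect]⟩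
      · refine ⟨m ++ [j] ++ [i], List.isChain_append.2 ⟨hm, List.isChain_singleton i, ?_⟩,
          walk_append_singleton _ _ _⟩
        simpa using hij

lemma exists_apollonianMem_mulVec_eq_iff {w : Fin 4 → ℤ} :
    (∃ γ, ApollonianMem γ ∧ γ.mulVec r = w) ↔ ∃ m, Reduced m ∧ walk r m = w := by
  constructor
  · rintro ⟨_, ⟨l, rfl⟩, rfl⟩
    rw [mulVec_prod_map_Sgen]
    exact exists_reduced_walk_eq r l.reverse
  · rintro ⟨m, -, rfl⟩
    exact ⟨_, ⟨m.reverse, rfl⟩, by rw [mulVec_prod_map_Sgen, List.reverse_reverse]⟩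

/-- The configuration of a quadruple, the labelling `e` listing its undistinguished entries first
and its distinguished entry last. -/
noncomputable def config (v : Fin 4 → ℤ) (e : Equiv.Perm (Fin 4)) : Config :=
  (fun i => ∑ j : Fin 3, (v (e j.castSucc) : ℝ) - v (e i.castSucc),
    (v (e (Fin.last 3)) - ∑ j : Fin 3, (v (e j.castSucc) : ℝ)) / 2)

/-- The labelling for which the distinguished entry is the one just reflected by move `i`. -/
def nextLabelling (e : Equiv.Perm (Fin 4)) (i : Fin 3) : Equiv.Perm (Fin 4) :=
  e * Equiv.swap i.castSucc (Fin.last 3)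

lemma nextLabelling_last (e : Equiv.Perm (Fin 4)) (i : Fin 3) :
    nextLabelling e i (Fin.last 3) = e i.castSucc := by
  simp [nextLabelling]

lemma curv_config (v : Fin 4 → ℤ) (e : Equiv.Perm (Fin 4)) :
    curv (config v e) = v (e (Fin.last 3)) := by
  simp only [curv, config, Fin.sum_univ_three]
  ring

lemma reflect_comp_perm (v : Fin 4 → ℤ) (e : Equiv.Perm (Fin 4)) (k : Fin 4) :
    reflect (e k) v ∘ e = reflect k (v ∘ e) := by
  ext j
  simp only [reflect_apply, e.injective.eq_iff, Function.comp_apply, Equiv.sum_comp e v]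

lemma config_comp (v : Fin 4 → ℤ) (e σ : Equiv.Perm (Fin 4)) :
    config (v ∘ e) σ = config v (e * σ) := rfl

lemma config_reflect (v : Fin 4 → ℤ) (e : Equiv.Perm (Fin 4)) (i : Fin 3) :
    config (reflect (e i.castSucc) v) (nextLabelling e i) = child i (config v e) := by
  rw [nextLabelling, ← config_comp, reflect_comp_perm]
  simp only [config, child, reflect_apply, Function.comp_apply, Fin.sum_univ_three,
    Fin.sum_univ_four]
  ext j
  · fin_cases i <;> fin_cases j <;> simp [Equiv.swap_apply_def] <;> ring
  · fin_cases i <;> simp [Equiv.swap_apply_def] <;> ring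

lemma exists_castSucc_eq {e : Equiv.Perm (Fin 4)} {j : Fin 4} (hj : j ≠ e (Fin.last 3)) :
    ∃ i : Fin 3, e i.castSucc = j := by
  obtain ⟨i, hi⟩ := Fin.exists_castSucc_eq.2 fun h => hj (e.symm_apply_eq.1 h)
  exact ⟨i, by rw [hi, e.apply_symm_apply]⟩

lemma abs_lt_of_admissible_config {e : Equiv.Perm (Fin 4)} (h : Admissible (config v e))
    {j : Fin 4} (hj : j ≠ e (Fin.last 3)) : |v j| < v (e (Fin.last 3)) := by
  obtain ⟨i, hi⟩ := exists_castSucc_eq hj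
  obtain ⟨hx, hs, hle, -⟩ := h
  have hx := hx i
  have hle := hle i
  simp only [config, Finset.sum_sub_distrib, Finset.sum_const, Finset.card_univ, Fintype.card_fin,
    nsmul_eq_mul, Nat.cast_ofNat, hi] at hx hs hle
  have : |(v j : ℝ)| < v (e (Fin.last 3)) := abs_lt.2 (by constructor <;> linarith)
  exact_mod_cast this

/-- A quadruple at which each generator increases the reflected entry and creates an admissible
configuration; the sharp form `2 * v k ≤ ∑ i, v i` of the first condition is the definition of the
root quadruple of a packing. -/
structure IsRoot (v : Fin 4 → ℤ) : Prop where
  two_mul_lt_sum : ∀ k, 2 * v k < ∑ i, v i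
  le_sum_add : ∀ j k, j ≠ k → v k ≤ ∑ i, v i + 3 * v j

lemma IsRoot.lt_reflect (hr : IsRoot r) (j k : Fin 4) : r j < reflect k r k := by
  have hj := hr.two_mul_lt_sum j
  have hk := hr.two_mul_lt_sum k
  rw [reflect_apply, if_pos rfl]
  lia

lemma IsRoot.comp_perm (hr : IsRoot r) (e : Equiv.Perm (Fin 4)) : IsRoot (r ∘ e) := by
  constructor <;> simp only [Function.comp_apply, Equiv.sum_comp e r]
  · exact fun k => hr.two_mul_lt_sum (e k)
  · exact fun j k hjk => hr.le_sum_add (e j) (e k) (e.injective.ne hjk)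

lemma IsRoot.sum_pos (hr : IsRoot r) : 0 < ∑ i, r i := by
  have := Finset.sum_lt_sum_of_nonempty Finset.univ_nonempty fun k _ => hr.two_mul_lt_sum k
  rw [← Finset.mul_sum, Finset.sum_const, Finset.card_univ, Fintype.card_fin, nsmul_eq_mul] at this
  push_cast at this
  linarith

lemma IsRoot.sum_add_two_mul_nonneg (hr : IsRoot r) (j : Fin 4) : 0 ≤ ∑ i, r i + 2 * r j := by
  have hsum := hr.sum_pos
  rcases le_or_gt 0 (r j) with hj | hj
  · positivity
  · obtain ⟨k, hk⟩ : ∃ k, 0 < r k := by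
      by_contra! h
      exact hsum.not_ge (Finset.sum_nonpos fun k _ => h k)
    linarith [hr.le_sum_add j k (by rintro rfl; exact hk.not_gt hj)]

lemma config_reflect_last (v : Fin 4 → ℤ) :
    config (reflect (Fin.last 3) v) 1 =
      (fun i => ∑ j : Fin 3, (v j.castSucc : ℝ) - v i.castSucc,
        (∑ j : Fin 3, (v j.castSucc : ℝ) - v (Fin.last 3)) / 2) := by
  simp only [config, Equiv.Perm.one_apply, reflect_apply, if_neg (Fin.castSucc_ne_last _),
    ↓reduceIte, Fin.sum_univ_castSucc v]
  push_cast
  congr 1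
  ring

lemma IsRoot.admissible (hr : IsRoot r) (e : Equiv.Perm (Fin 4)) :
    Admissible (config (reflect (e (Fin.last 3)) r) e) := by
  rw [← mul_one e, ← config_comp, mul_one, reflect_comp_perm, config_reflect_last]
  have hw := hr.comp_perm e
  generalize r ∘ e = w at hw
  have hlt : ∀ k, 2 * (w k : ℝ) < ∑ i : Fin 3, (w i.castSucc : ℝ) + w (Fin.last 3) := fun k => by
    exact_mod_cast (hw.two_mul_lt_sum k).trans_eq (Fin.sum_univ_castSucc w)
  have hlast := hlt (Fin.last 3)
  have hsum : ∑ i : Fin 3, (∑ j : Fin 3, (w j.castSucc : ℝ) - w i.castSucc) =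
      2 * ∑ j : Fin 3, (w j.castSucc : ℝ) := by
    simp only [Fin.sum_univ_three]
    ring
  refine ⟨fun i => ?_, by linarith, fun i => ?_, fun i => ?_⟩ <;> simp only [hsum]
  · linarith [hlt i.castSucc]
  · have hle := hw.le_sum_add i.castSucc (Fin.last 3) (Fin.castSucc_ne_last i)
    rw [Fin.sum_univ_castSucc] at hle
    have : (w (Fin.last 3) : ℝ) ≤ ∑ j : Fin 3, (w j.castSucc : ℝ) + w (Fin.last 3) +
      3 * w i.castSucc := mod_cast hle
    linarith
  · have hnonneg := hw.sum_add_two_mul_nonneg i.castSucc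
    rw [Fin.sum_univ_castSucc] at hnonneg
    have : 0 ≤ ∑ j : Fin 3, (w j.castSucc : ℝ) + w (Fin.last 3) + 2 * w i.castSucc :=
      mod_cast hnonneg
    linarith

end Orbit

section Words

variable {v r : Fin 4 → ℤ} {l m : List (Fin 4)}

lemma exists_admissible_walk {e : Equiv.Perm (Fin 4)} (h : Admissible (config v e))
    (hm : Reduced (e (Fin.last 3) :: m)) :
    ∃ e', Admissible (config (walk v m) e') ∧
      (e (Fin.last 3) :: m).getLast? = some (e' (Fin.last 3)) ∧
      v (e (Fin.last 3)) + m.length ≤ walk v m (e' (Fin.last 3)) := by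
  induction m generalizing v e with
  | nil => exact ⟨e, h, rfl, by simp [walk]⟩
  | cons k m ih =>
    obtain ⟨hk, hm⟩ := List.isChain_cons_cons.1 hm
    obtain ⟨i, rfl⟩ := exists_castSucc_eq hk.symm
    have hc := config_reflect v e i
    have hlt : v (e (Fin.last 3)) < reflect (e i.castSucc) v (e i.castSucc) := by
      have := h.curv_lt_curv_child i
      rw [← hc, curv_config, curv_config, nextLabelling_last] at this
      exact_mod_cast this
    rw [← nextLabelling_last] at hm
    obtain ⟨e', he', hlast, hle⟩ := ih (hc ▸ h.child i) hm
    rw [nextLabelling_last] at hlast hle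
    refine ⟨e', he', by rwa [List.getLast?_cons_cons], ?_⟩
    change _ ≤ walk (reflect (e i.castSucc) v) m _
    rw [List.length_cons]
    lia

lemma IsRoot.exists_admissible_walk (hr : IsRoot r) (hl : Reduced l) (h : l ≠ []) :
    ∃ e, Admissible (config (walk r l) e) ∧ l.getLast? = some (e (Fin.last 3)) ∧
      ∀ j, r j + l.length ≤ walk r l (e (Fin.last 3)) := by
  obtain ⟨k, m, rfl⟩ := List.exists_cons_of_ne_nil h
  obtain ⟨e, rfl⟩ : ∃ e : Equiv.Perm (Fin 4), e (Fin.last 3) = k :=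
    ⟨Equiv.swap k (Fin.last 3), Equiv.swap_apply_right _ _⟩
  obtain ⟨e', he', hlast, hle⟩ := Apollonian.exists_admissible_walk (hr.admissible e) hl
  refine ⟨e', he', hlast, fun j => ?_⟩
  have := hr.lt_reflect j (e (Fin.last 3))
  change _ ≤ walk (reflect (e (Fin.last 3)) r) m _
  rw [List.length_cons]
  lia

lemma IsRoot.walk_ne (hr : IsRoot r) (hl : Reduced l) (h : l ≠ []) : walk r l ≠ r := by
  intro heq
  obtain ⟨e, -, -, hle⟩ := hr.exists_admissible_walk hl h
  have := hle (e (Fin.last 3))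
  have := List.length_pos_iff.2 h
  rw [heq] at *
  lia

/-- The last letter of a word is recovered as the position of the largest entry. -/
lemma IsRoot.injOn_walk (hr : IsRoot r) : Set.InjOn (walk r) {l | Reduced l} := by
  intro l hl l' hl' h
  induction l using List.reverseRecOn generalizing l' with
  | nil => exact (not_imp_not.1 (fun h' => hr.walk_ne hl' h') h.symm).symm
  | append_singleton l i ih =>
    rcases l'.eq_nil_or_concat with rfl | ⟨l', i', rfl⟩
    · exact absurd h (hr.walk_ne hl (by simp))
    rw [List.concat_eq_append] at *
    obtain ⟨e, he, hi, -⟩ := hr.exists_admissible_walk hl (by simp)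
    obtain ⟨e', he', hi', -⟩ := hr.exists_admissible_walk hl' (by simp)
    have hii' : i = i' := by
      by_contra hne
      simp only [List.getLast?_concat, Option.some.injEq] at hi hi'
      have h1 := (le_abs_self _).trans_lt (abs_lt_of_admissible_config he (hi ▸ Ne.symm hne))
      have h2 := (le_abs_self _).trans_lt (abs_lt_of_admissible_config he' (hi' ▸ hne))
      rw [← hi, h] at h1
      rw [← hi'] at h2
      exact h1.asymm h2
    subst hii'
    rw [walk_append_singleton, walk_append_singleton] at h
    rw [ih hl.left_of_append hl'.left_of_append (Function.Involutive.injective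
      (reflect_reflect i) h)]

/-- The words consisting of a letter `k ∈ s` followed by a word of `W k`. -/
def consWords (s : Finset (Fin 4)) (W : Fin 4 → Finset (List (Fin 4))) : Finset (List (Fin 4)) :=
  (s.sigma W).image fun x => x.1 :: x.2

/-- The words of length less than `n` which can follow the letter `k` in a reduced word. -/
def wordsAfter : ℕ → Fin 4 → Finset (List (Fin 4))
  | 0, _ => ∅
  | n + 1, k => insert [] (consWords {k}ᶜ (wordsAfter n))

lemma mem_consWords {s : Finset (Fin 4)} {W : Fin 4 → Finset (List (Fin 4))} :
    l ∈ consWords s W ↔ ∃ k ∈ s, ∃ m ∈ W k, k :: m = l := by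
  simp [consWords, and_assoc]

lemma sum_consWords (s : Finset (Fin 4)) (W : Fin 4 → Finset (List (Fin 4)))
    (f : List (Fin 4) → ℝ) :
    ∑ l ∈ consWords s W, f l = ∑ k ∈ s, ∑ m ∈ W k, f (k :: m) := by
  rw [consWords, Finset.sum_image, Finset.sum_sigma]
  rintro ⟨k, m⟩ - ⟨k', m'⟩ - h
  simpa using h

lemma mem_wordsAfter {n : ℕ} {k : Fin 4} :
    m ∈ wordsAfter n k ↔ Reduced (k :: m) ∧ m.length < n := by
  induction n generalizing k m with
  | zero => simp [wordsAfter]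
  | succ n ih =>
    cases m with
    | nil => simp [wordsAfter]
    | cons j m =>
      simp [wordsAfter, mem_consWords, ih, List.isChain_cons_cons, and_assoc, eq_comm]

lemma sum_compl_apply_last (e : Equiv.Perm (Fin 4)) (g : Fin 4 → ℝ) :
    ∑ j ∈ {e (Fin.last 3)}ᶜ, g j = ∑ i : Fin 3, g (e i.castSucc) := by
  have h : ∑ j, g j = ∑ i : Fin 3, g (e i.castSucc) + g (e (Fin.last 3)) := by
    rw [← Equiv.sum_comp e, Fin.sum_univ_castSucc]
  rwa [Fintype.sum_eq_sum_compl_add (e (Fin.last 3)), add_left_inj] at h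

lemma sum_wordsAfter_eq_treeSum {F : (Fin 4 → ℤ) → ℝ} {φ : ℝ → ℝ}
    (hF : ∀ v e, Admissible (config v e) → F v = φ (v (e (Fin.last 3)))) (n : ℕ)
    {e : Equiv.Perm (Fin 4)} (h : Admissible (config v e)) :
    ∑ m ∈ wordsAfter n (e (Fin.last 3)), F (walk v m) = treeSum φ n (config v e) := by
  induction n generalizing v e with
  | zero => simp [wordsAfter, treeSum_zero]
  | succ n ih =>
    have hnil : [] ∉ consWords {e (Fin.last 3)}ᶜ (wordsAfter n) := by simp [mem_consWords]
    rw [wordsAfter, Finset.sum_insert hnil, sum_consWords, sum_compl_apply_last, treeSum_succ,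
      curv_config]
    congr 1
    · exact hF v e h
    · refine Finset.sum_congr rfl fun i _ => ?_
      have hc := config_reflect v e i
      rw [← hc, ← ih (hc ▸ h.child i), nextLabelling_last]
      rfl

end Words

section OrbitCounting

variable {r : Fin 4 → ℤ} {T : ℝ}

/-- The members of the orbit of `r`, other than `r`, whose entries are less than `T` in absolute
value. -/
def orbitBelow (r : Fin 4 → ℤ) (T : ℝ) : Set (Fin 4 → ℤ) :=
  {v | (∃ γ, ApollonianMem γ ∧ γ.mulVec r = v) ∧ v ≠ r ∧ ∀ j, (|v j| : ℝ) < T}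

lemma forall_abs_lt_iff {v : Fin 4 → ℤ} {e : Equiv.Perm (Fin 4)} (h : Admissible (config v e)) :
    (∀ j, (|v j| : ℝ) < T) ↔ (v (e (Fin.last 3)) : ℝ) < T := by
  refine ⟨fun hT => (le_abs_self _).trans_lt (hT _), fun hT j => ?_⟩
  by_cases hj : j = e (Fin.last 3)
  · rwa [hj, abs_of_pos (by rw [← curv_config]; exact h.curv_pos)]
  · exact lt_trans (by exact_mod_cast abs_lt_of_admissible_config h hj) hT

lemma IsRoot.admissible_config_reflect (hr : IsRoot r) (k : Fin 4) :
    Admissible (config (reflect k r) (Equiv.swap k (Fin.last 3))) := by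
  simpa only [Equiv.swap_apply_right] using hr.admissible (Equiv.swap k (Fin.last 3))

lemma IsRoot.mem_orbitBelow_iff (hr : IsRoot r) {n : ℕ} (hn : T - r 0 ≤ n) {v : Fin 4 → ℤ} :
    v ∈ orbitBelow r T ↔
      ∃ l ∈ consWords Finset.univ (wordsAfter n), (∀ j, (|walk r l j| : ℝ) < T) ∧ walk r l = v := by
  simp only [orbitBelow, Set.mem_ofPred_eq, exists_apollonianMem_mulVec_eq_iff, mem_consWords,
    mem_wordsAfter]
  constructor
  · rintro ⟨⟨l, hl, rfl⟩, hne, hT⟩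
    have hnil : l ≠ [] := by rintro rfl; exact hne rfl
    obtain ⟨e, -, -, hlen⟩ := hr.exists_admissible_walk hl hnil
    obtain ⟨k, m, rfl⟩ := List.exists_cons_of_ne_nil hnil
    refine ⟨_, ⟨k, Finset.mem_univ k, m, ⟨hl, ?_⟩, rfl⟩, hT, rfl⟩
    have hlt := (le_abs_self _).trans_lt (hT (e (Fin.last 3)))
    have hlen : (r 0 : ℝ) + (k :: m).length ≤ walk r (k :: m) (e (Fin.last 3)) :=
      mod_cast hlen 0
    have : ((k :: m).length : ℝ) < n := by linarith
    rw [Nat.cast_lt, List.length_cons] at this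
    lia
  · rintro ⟨_, ⟨k, -, m, ⟨hl, -⟩, rfl⟩, hT, rfl⟩
    exact ⟨⟨_, hl, rfl⟩, hr.walk_ne hl (List.cons_ne_nil k m), hT⟩

lemma IsRoot.card_orbitBelow (hr : IsRoot r) {n : ℕ} (hn : T - r 0 ≤ n) (hT : 0 < T) :
    (Nat.card (orbitBelow r T) : ℝ) =
      ∑ k, treeSum step n (T⁻¹ • config (reflect k r) (Equiv.swap k (Fin.last 3))) := by
  classical
  have himage : orbitBelow r T = walk r ''
      ↑{l ∈ consWords Finset.univ (wordsAfter n) | ∀ j, (|walk r l j| : ℝ) < T} := by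
    ext v
    simp only [hr.mem_orbitBelow_iff hn, Finset.coe_filter, Set.mem_image, Set.mem_ofPred_eq,
      and_assoc]
  rw [himage, Nat.card_image_of_injOn (hr.injOn_walk.mono fun l hl => ?_), Nat.card_coe_set_eq,
    Set.ncard_coe_finset, Finset.natCast_card_filter, sum_consWords]
  · refine Finset.sum_congr rfl fun k _ => ?_
    have hsum := sum_wordsAfter_eq_treeSum (φ := fun u => if u < T then 1 else 0)
      (fun v e h => if_congr (forall_abs_lt_iff h) rfl rfl) n
      (hr.admissible_config_reflect k)
    simp only [treeSum_smul, step_inv_mul hT]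
    rwa [Equiv.swap_apply_right] at hsum
  · simp only [Finset.coe_filter, mem_consWords, mem_wordsAfter, Set.mem_ofPred_eq] at hl
    obtain ⟨⟨k, -, m, ⟨hm, -⟩, rfl⟩, -⟩ := hl
    exact hm

lemma IsRoot.card_orbitBelow_eq_treeLimit (hr : IsRoot r) (hT : 0 < T) :
    (Nat.card (orbitBelow r T) : ℝ) =
      ∑ k, treeLimit step (T⁻¹ • config (reflect k r) (Equiv.swap k (Fin.last 3))) := by
  have hlim : Tendsto (fun n => ∑ k, treeSum step n
      (T⁻¹ • config (reflect k r) (Equiv.swap k (Fin.last 3)))) atTop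
      (nhds (∑ k, treeLimit step (T⁻¹ • config (reflect k r) (Equiv.swap k (Fin.last 3))))) := by
    refine tendsto_finsetSum _ fun k _ => treeSummable_step.tendsto_treeSum ?_
    exact (hr.admissible_config_reflect k).smul (inv_pos.2 hT)
  refine tendsto_nhds_unique (tendsto_const_nhds.congr' ?_) hlim
  filter_upwards [eventually_ge_atTop ⌈T - r 0⌉₊] with n hn
  exact hr.card_orbitBelow (Nat.ceil_le.1 hn) hT

end OrbitCounting

lemma isRoot_rootQuadruple : IsRoot rootQuadruple := by
  constructor <;> decide

end Apollonian

open Apollonian in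
theorem stmt13_general :
    ∃ δ : ℝ, 1.30 < δ ∧ δ < 1.31 ∧ ∀ r : Fin 4 → ℤ, IsRoot r →
      ∃ c : ℝ, 0 < c ∧
        Tendsto (fun T : ℝ => (Nat.card (orbitBelow r T) : ℝ) / T ^ δ)
          atTop (nhds c) := by
  obtain ⟨δ, h1, h2, hdiv, hconv⟩ := exists_critical_exponent (a := 1.30) (b := 131 / 100)
    (by norm_num) (by norm_num)
    converges_131_div_100 ⟨108 / 83, by norm_num, not_converges_108_div_83⟩
  obtain ⟨h, hh⟩ := exists_isPattersonFunction (by linarith) (by linarith) hdiv hconv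
  refine ⟨δ, h1, by linarith, fun r hr => ?_⟩
  choose L hL hlim using fun k =>
    exists_tendsto_treeLimit_step_div (by linarith) (by linarith) hh
      (hr.admissible_config_reflect k)
  refine ⟨∑ k, L k, Finset.sum_pos (fun k _ => hL k) Finset.univ_nonempty,
    (tendsto_finsetSum _ fun k _ => hlim k).congr' ?_⟩
  filter_upwards [eventually_gt_atTop 0] with T hT
  rw [hr.card_orbitBelow_eq_treeLimit hT, Finset.sum_div]

theorem stmt13 :
    ∃ δ : ℝ, 1.30 < δ ∧ δ < 1.31 ∧
      ∃ c : ℝ, 0 < c ∧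
        Tendsto
          (fun T : ℝ =>
            (Nat.card {v : Fin 4 → ℤ | v ∈ apollonianOrbit ∧ v ≠ rootQuadruple ∧
                ∀ j : Fin 4, (|v j| : ℝ) < T} : ℝ) / T ^ δ)
          atTop (nhds c) := by
  obtain ⟨δ, h1, h2, h⟩ := stmt13_general
  exact ⟨δ, h1, h2, h rootQuadruple Apollonian.isRoot_rootQuadruple⟩
end

section
/- (i) For every integer k, the k-th power of the matrix S₄S₃ in GL₄(ℤ) equals [[1,0,0,0],[0,1,0,0],[4k²−2k, 4k²−2k, 1−2k, 2k],[4k²+2k, 4k²+2k, −2k, 2k+1]]. (ii) Consequently, for every integer k, the fourth entry of (S₄S₃)^k · v₀ equals 32k² + 24k + 27; in particular 32k² + 24k + 27 ∈ B for every k ∈ ℤ. -/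
/-- `B` is the set of curvatures of circles in the gasket. -/
def curvatures : Set ℤ :=
  {n : ℤ | ∃ (γ : Matrix (Fin 4) (Fin 4) ℤ) (j : Fin 4),
    ApollonianMem γ ∧ (γ.mulVec rootQuadruple) j = n}

/-!
The product `S₄S₃` fixes two mutually tangent circles of the packing, so it acts as a parabolic
transformation fixing their point of tangency and its matrix is unipotent. Its powers therefore
have entries polynomial in the exponent, and these polynomials define a homomorphism from the
additive group of any commutative ring to `4 × 4` matrices. A homomorphism on `ℤ` is determined by
its value at `1`, so the closed form for all powers reduces to the case `k = 1`.
-/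

open Matrix Multiplicative

theorem prod_map_mul_prod_map_reverse_eq_one {ι M : Type*} [Monoid M] {f : ι → M}
    (hf : ∀ i, f i * f i = 1) (l : List ι) :
    (l.map f).prod * (l.reverse.map f).prod = 1 := by
  induction l with
  | nil => simp
  | cons i l ih =>
    calc ((i :: l).map f).prod * ((i :: l).reverse.map f).prod
        = f i * ((l.map f).prod * (l.reverse.map f).prod) * f i := by simp [mul_assoc]
      _ = 1 := by rw [ih, mul_one, hf]

theorem val_zpow_eq_of_val_eq_map_one {M : Type*} [Monoid M] (f : Multiplicative ℤ →* M)
    {u : Mˣ} (hu : (u : M) = f (ofAdd 1)) (k : ℤ) : ((u ^ k : Mˣ) : M) = f (ofAdd k) := by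
  have hu' : u = f.toHomUnits (ofAdd 1) := Units.ext hu
  rw [hu', ← f.coe_toHomUnits, MonoidHom.apply_mint _ f.toHomUnits (ofAdd k), toAdd_ofAdd]

theorem sgen_mul_self_eq_one (i : Fin 4) : Sgen i * Sgen i = 1 := by
  revert i
  decide

/-- The generator `Sᵢ₊₁` as an element of `GL₄(ℤ)`: the indices in `Fin 4` start at `0`. -/
def sgenUnit (i : Fin 4) : (Matrix (Fin 4) (Fin 4) ℤ)ˣ where
  val := Sgen i
  inv := Sgen i
  val_inv := sgen_mul_self_eq_one i
  inv_val := sgen_mul_self_eq_one i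

/-- The Apollonian group `Γ` as a subgroup of `GL₄(ℤ)`. Words without inverse letters are closed
under inversion because the generators are involutions. -/
def apollonianGroup : Subgroup (Matrix (Fin 4) (Fin 4) ℤ)ˣ where
  carrier := {u | ApollonianMem u}
  one_mem' := ⟨[], rfl⟩
  mul_mem' := by
    rintro u v ⟨l, hu⟩ ⟨m, hv⟩
    exact ⟨l ++ m, by rw [Units.val_mul, hu, hv, List.map_append, List.prod_append]⟩
  inv_mem' := by
    rintro u ⟨l, hu⟩
    refine ⟨l.reverse, Units.inv_eq_of_mul_eq_one_right ?_⟩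
    rw [hu, prod_map_mul_prod_map_reverse_eq_one sgen_mul_self_eq_one]

theorem sgenUnit_mem_apollonianGroup (i : Fin 4) : sgenUnit i ∈ apollonianGroup :=
  ⟨[i], List.prod_singleton.symm⟩

theorem mulVec_rootQuadruple_mem_curvatures {u : (Matrix (Fin 4) (Fin 4) ℤ)ˣ}
    (hu : u ∈ apollonianGroup) (j : Fin 4) : (u.val *ᵥ rootQuadruple) j ∈ curvatures :=
  ⟨u, j, hu, rfl⟩

section Parabolic

variable {R : Type*} [CommRing R]

/-- The matrix polynomial interpolating the powers of `S₄S₃`. -/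
def parabolicMatrix (t : R) : Matrix (Fin 4) (Fin 4) R :=
  !![1, 0, 0, 0;
     0, 1, 0, 0;
     4 * t ^ 2 - 2 * t, 4 * t ^ 2 - 2 * t, 1 - 2 * t, 2 * t;
     4 * t ^ 2 + 2 * t, 4 * t ^ 2 + 2 * t, -(2 * t), 2 * t + 1]

theorem parabolicMatrix_zero : parabolicMatrix (0 : R) = 1 := by
  ext i j
  fin_cases i <;> fin_cases j <;> simp [parabolicMatrix]

theorem parabolicMatrix_add (s t : R) :
    parabolicMatrix (s + t) = parabolicMatrix s * parabolicMatrix t := by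
  ext i j
  fin_cases i <;> fin_cases j <;>
    simp only [parabolicMatrix, mul_apply, Fin.sum_univ_four, of_apply, cons_val, Fin.zero_eta,
      Fin.mk_one, Fin.reduceFinMk] <;>
    ring

variable (R) in
/-- The one-parameter group `t ↦ parabolicMatrix t`, as a homomorphism from the additive group
of `R`. -/
def parabolicHom : Multiplicative R →* Matrix (Fin 4) (Fin 4) R where
  toFun t := parabolicMatrix t.toAdd
  map_one' := parabolicMatrix_zero
  map_mul' s t := parabolicMatrix_add s.toAdd t.toAdd

theorem parabolicMatrix_mulVec_three (t : R) (v : Fin 4 → R) :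
    (parabolicMatrix t *ᵥ v) 3 =
      (4 * t ^ 2 + 2 * t) * (v 0 + v 1) - 2 * t * v 2 + (2 * t + 1) * v 3 := by
  simp only [parabolicMatrix, mulVec, dotProduct, Fin.sum_univ_four, of_apply, cons_val]
  ring

end Parabolic

theorem parabolicMatrix_one : parabolicMatrix (1 : ℤ) = Sgen 3 * Sgen 2 := by
  decide

theorem val_sgenUnit_mul_zpow (k : ℤ) :
    ((sgenUnit 3 * sgenUnit 2) ^ k).val = parabolicMatrix k :=
  val_zpow_eq_of_val_eq_map_one (parabolicHom ℤ) parabolicMatrix_one.symm k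

theorem parabolicMatrix_mulVec_rootQuadruple_three (k : ℤ) :
    (parabolicMatrix k *ᵥ rootQuadruple) 3 = 32 * k ^ 2 + 24 * k + 27 := by
  rw [parabolicMatrix_mulVec_three]
  simp only [rootQuadruple, cons_val]
  ring

theorem stmt15 :
    ∃ u : (Matrix (Fin 4) (Fin 4) ℤ)ˣ,
      (u : Matrix (Fin 4) (Fin 4) ℤ) = Sgen 3 * Sgen 2 ∧
      ∀ k : ℤ,
        ((u ^ k : (Matrix (Fin 4) (Fin 4) ℤ)ˣ) : Matrix (Fin 4) (Fin 4) ℤ) =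
          !![1, 0, 0, 0;
             0, 1, 0, 0;
             4 * k ^ 2 - 2 * k, 4 * k ^ 2 - 2 * k, 1 - 2 * k, 2 * k;
             4 * k ^ 2 + 2 * k, 4 * k ^ 2 + 2 * k, -(2 * k), 2 * k + 1] ∧
        (((u ^ k : (Matrix (Fin 4) (Fin 4) ℤ)ˣ) :
            Matrix (Fin 4) (Fin 4) ℤ).mulVec rootQuadruple) 3 =
          32 * k ^ 2 + 24 * k + 27 ∧
        32 * k ^ 2 + 24 * k + 27 ∈ curvatures := by
  have hmem : sgenUnit 3 * sgenUnit 2 ∈ apollonianGroup :=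
    mul_mem (sgenUnit_mem_apollonianGroup 3) (sgenUnit_mem_apollonianGroup 2)
  refine ⟨sgenUnit 3 * sgenUnit 2, rfl, fun k => ?_⟩
  have hentry : (((sgenUnit 3 * sgenUnit 2) ^ k).val *ᵥ rootQuadruple) 3 =
      32 * k ^ 2 + 24 * k + 27 := by
    rw [val_sgenUnit_mul_zpow, parabolicMatrix_mulVec_rootQuadruple_three]
  exact ⟨val_sgenUnit_mul_zpow k, hentry,
    hentry ▸ mulVec_rootQuadruple_mem_curvatures (zpow_mem hmem k) 3⟩
end
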